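/- arXiv:math/0111182 — 3 statements merged into one kernel-verified Lean document; each statement's English description precedes it below -/
import Mathlib

section
/- Let (X, B) be a standard Borel space with a probability measure μ, let R be a hyperfinite Borel equivalence relation on X with countable classes under which μ is quasi-invariant, let A be a locally compact second countable Hausdorff topological group, and let c : R → A be a Borel cocycle (c(x,y)c(y,z) = c(x,z) whenever x R y R z). Then there exist a Bratteli diagram (V,E) with infinite path space X̄ and tail equivalence relation R̄, a Markov measure μ̄ on X̄, conull Borel sets X_0 ⊆ X and X̄_0 ⊆ X̄, a Borel isomorphism θ : X_0 → X̄_0 with θ_*μ equivalent to μ̄ and x R y ⟺ θ(x) R̄ θ(y) for x, y ∈ X_0, a labelling f : E → A with associated quasi-product cocycle c̄, and a Borel map b : X̄_0 → A such that c(x,y) = b(θ(x))^{-1} c̄(θ(x), θ(y)) b(θ(y)) for all (x,y) ∈ R with x, y ∈ X_0. -/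
open MeasureTheory

/-- `μ` is quasi-invariant under the countable Borel equivalence relation `R`: every
partial Borel automorphism of `R` maps null sets to null sets. -/
def QuasiInvariantRel {X : Type*} [MeasurableSpace X] (μ : Measure X)
    (R : X → X → Prop) : Prop :=
  ∀ (g : X → X) (A : Set X), Measurable g → MeasurableSet A → Set.InjOn g A →
    (∀ x ∈ A, R x (g x)) →
    ∀ N : Set X, MeasurableSet N → μ N = 0 → μ (g '' (N ∩ A)) = 0

/-- `R` is hyperfinite: on a conull Borel set, `R` is the union of an increasing
sequence of Borel equivalence relations with finite classes. -/
def HyperfiniteRel {X : Type*} [MeasurableSpace X] (μ : Measure X)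
    (R : X → X → Prop) : Prop :=
  ∃ (X₀ : Set X) (S : ℕ → X → X → Prop),
    MeasurableSet X₀ ∧ μ X₀ᶜ = 0 ∧
    (∀ n, MeasurableSet {p : X × X | S n p.1 p.2}) ∧
    (∀ n, ∀ x ∈ X₀, S n x x) ∧
    (∀ n x y, S n x y → S n y x) ∧
    (∀ n x y z, S n x y → S n y z → S n x z) ∧
    (∀ n x y, S n x y → x ∈ X₀ ∧ y ∈ X₀) ∧
    (∀ n x, {y | S n x y}.Finite) ∧
    (∀ n x y, S n x y → S (n + 1) x y) ∧
    (∀ x ∈ X₀, ∀ y ∈ X₀, (R x y ↔ ∃ n, S n x y))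

/-- A Bratteli diagram: finite nonempty vertex sets `V n` (levels `n = 0, 1, 2, …`),
finite edge sets `E n` (the edges from level `n` to level `n+1`), with source and
range maps, such that every vertex emits at least one edge. -/
structure BratteliDiagram where
  V : ℕ → Type
  E : ℕ → Type
  src : ∀ n, E n → V n
  rng : ∀ n, E n → V (n + 1)
  finV : ∀ n, Finite (V n)
  finE : ∀ n, Finite (E n)
  nonemptyV : ∀ n, Nonempty (V n)
  emits : ∀ n (v : V n), ∃ e : E n, src n e = v

namespace BratteliDiagram

/-- The infinite path space of a Bratteli diagram: sequences of composable edges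
starting at level `0`. -/
def PathSpace (B : BratteliDiagram) : Type :=
  { x : ∀ n, B.E n // ∀ n, B.rng n (x n) = B.src (n + 1) (x (n + 1)) }

instance (B : BratteliDiagram) (n : ℕ) : TopologicalSpace (B.E n) := ⊥

instance (B : BratteliDiagram) (n : ℕ) : DiscreteTopology (B.E n) := ⟨rfl⟩

/-- The topology on the path space generated by the cylinder sets: it is the topology
induced by the product of the discrete topologies on the edge sets. -/
instance (B : BratteliDiagram) : TopologicalSpace B.PathSpace :=
  instTopologicalSpaceSubtype

/-- The tail equivalence relation on the path space of a Bratteli diagram. -/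
def Tail (B : BratteliDiagram) (x y : B.PathSpace) : Prop :=
  ∃ N, ∀ n ≥ N, x.1 n = y.1 n

end BratteliDiagram

namespace BratteliDiagram

/-- The Borel σ-algebra on the path space. -/
instance (B : BratteliDiagram) : MeasurableSpace B.PathSpace := borel _

instance (B : BratteliDiagram) : BorelSpace B.PathSpace := ⟨rfl⟩

/-- The cylinder set determined by the first `n` edges of the path `x`. -/
def cyl (B : BratteliDiagram) (x : B.PathSpace) (n : ℕ) : Set B.PathSpace :=
  {y | ∀ k < n, y.1 k = x.1 k}

end BratteliDiagram

section
open MeasureTheory Set Filter Topology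
open scoped ENNReal

theorem analytic_inner {α : Type*} [TopologicalSpace α] [PolishSpace α] [MeasurableSpace α]
    [BorelSpace α] (μ : Measure α) [IsFiniteMeasure μ] (f : (ℕ → ℕ) → α) (hf : Continuous f)
    (r : ℝ≥0∞) (hr : r < μ (range f)) : ∃ t ⊆ range f, MeasurableSet t ∧ r ≤ μ t := by
  have step : ∀ (k : ℕ) (B : Set (ℕ → ℕ)), r < μ (f '' B) →
      ∃ m : ℕ, r < μ (f '' (B ∩ {x | x k ≤ m})) := by
    intro k B hB
    have h1 : f '' B = ⋃ m : ℕ, f '' (B ∩ {x | x k ≤ m}) := by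
      rw [← image_iUnion, ← inter_iUnion]
      congr 1
      ext x
      simp only [mem_inter_iff, mem_iUnion, mem_ofPred_eq]
      exact ⟨fun h => ⟨h, _, le_rfl⟩, fun h => h.1⟩
    have hmono : Monotone (fun m : ℕ => f '' (B ∩ {x | x k ≤ m})) := by
      intro a b hab
      apply image_mono
      intro x hx
      exact ⟨hx.1, le_trans hx.2 hab⟩
    rw [h1, hmono.measure_iUnion, lt_iSup_iff] at hB
    exact hB
  choose! m hm using step
  let B : ℕ → Set (ℕ → ℕ) := fun k => Nat.rec univ (fun k B => B ∩ {x | x k ≤ m k B}) k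
  have hB : ∀ k, r < μ (f '' B k) := by
    intro k
    induction k with
    | zero => simpa [B] using hr
    | succ k ih => exact hm k _ ih
  let φ : ℕ → ℕ := fun k => m k (B k)
  have hBφ : ∀ k x, x ∈ B k → ∀ i < k, x i ≤ φ i := by
    intro k
    induction k with
    | zero => intro x _ i hi; omega
    | succ k ih =>
      intro x hx i hi
      rcases Nat.lt_succ_iff_lt_or_eq.1 hi with h | h
      · exact ih x hx.1 i h
      · subst h; exact hx.2
  let K : Set (ℕ → ℕ) := Set.pi univ (fun i => Iic (φ i))
  have hK : IsCompact K := isCompact_univ_pi (fun i => (finite_Iic (φ i)).isCompact)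
  refine ⟨f '' K, image_subset_range _ _, (hK.image hf).measurableSet, ?_⟩
  rw [Set.measure_eq_iInf_isOpen]
  refine le_iInf fun U => le_iInf fun hU => le_iInf fun hUo => ?_
  have : ∃ k, B k ⊆ f ⁻¹' U := by
    by_contra hcon
    push Not at hcon
    have hx : ∀ k, ∃ x ∈ B k, x ∉ f ⁻¹' U := fun k => not_subset.1 (hcon k)
    choose x hxB hxU using hx
    let y : ℕ → ℕ → ℕ := fun k i => min (x k i) (φ i)
    have hy : ∀ k, y k ∈ K := fun k i _ => mem_Iic.2 (min_le_right _ _)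
    obtain ⟨z, hzK, σ, hσ, hz⟩ := hK.tendsto_subseq hy
    have hxz : Tendsto (x ∘ σ) atTop (𝓝 z) := by
      rw [tendsto_pi_nhds] at hz ⊢
      intro i
      refine (hz i).congr' ?_
      filter_upwards [eventually_gt_atTop i] with k hk
      have : i < σ k := lt_of_lt_of_le hk (hσ.id_le k)
      exact min_eq_left (hBφ _ _ (hxB (σ k)) i this)
    have hzU : z ∈ f ⁻¹' U := hU (mem_image_of_mem f hzK)
    have := hxz.eventually ((hUo.preimage hf).mem_nhds hzU)
    obtain ⟨k, hk⟩ := this.exists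
    exact hxU _ hk
  obtain ⟨k, hk⟩ := this
  exact (hB k).le.trans (measure_mono (image_subset_iff.2 hk))

theorem analytic_nullMeasurable {α : Type*} [TopologicalSpace α] [PolishSpace α]
    [MeasurableSpace α]
    [BorelSpace α] (μ : Measure α) [IsFiniteMeasure μ] (s : Set α) (hs : AnalyticSet s) :
    NullMeasurableSet s μ := by
  rw [AnalyticSet] at hs
  rcases hs with rfl | ⟨f, hf, rfl⟩
  · exact MeasurableSet.empty.nullMeasurableSet
  by_cases h0 : μ (range f) = 0
  · exact NullMeasurableSet.of_null h0
  obtain ⟨u, -, hu, hlim⟩ := exists_seq_strictMono_tendsto' (pos_iff_ne_zero.2 h0)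
  choose t hts htm htr using fun n => analytic_inner μ f hf (u n) (hu n).2
  have hT : MeasurableSet (⋃ n, t n) := MeasurableSet.iUnion htm
  have hle : ⋃ n, t n ⊆ range f := iUnion_subset hts
  have hge : μ (range f) ≤ μ (⋃ n, t n) :=
    le_of_tendsto' hlim (fun n => (htr n).trans (measure_mono (subset_iUnion _ _)))
  refine NullMeasurableSet.congr hT.nullMeasurableSet ?_
  exact ae_eq_of_subset_of_measure_ge hle hge hT.nullMeasurableSet (measure_ne_top _ _)

end

section
open MeasureTheory Set Filter Topology
open scoped ENNReal

def GenBy {X : Type*} [MeasurableSpace X] (S : X → X → Prop) : Prop :=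
  ∃ γ : ℕ → X → X, (∀ j, Measurable (γ j)) ∧ ∀ x y, S x y ↔ ∃ j, γ j x = y

theorem genBy_of_countable {X : Type*} [MeasurableSpace X] {S : X → X → Prop} {ι : Type*}
    [Countable ι] [Nonempty ι] (γ : ι → X → X) (hγ : ∀ j, Measurable (γ j))
    (h : ∀ x y, S x y ↔ ∃ j, γ j x = y) : GenBy S := by
  obtain ⟨e, he⟩ := exists_surjective_nat ι
  exact ⟨fun n => γ (e n), fun n => hγ _, fun x y => by rw [h, he.exists]⟩

def resRel {X : Type*} (Z : Set X) (S : X → X → Prop) (x y : X) : Prop :=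
  x = y ∨ (S x y ∧ x ∈ Z ∧ y ∈ Z)

theorem resRel_equiv {X : Type*} (Z : Set X) (S : X → X → Prop)
    (hsymm : ∀ x y, S x y → S y x) (htrans : ∀ x y z, S x y → S y z → S x z) :
    Equivalence (resRel Z S) := by
  refine ⟨fun x => Or.inl rfl, ?_, ?_⟩
  · rintro x y (rfl | ⟨h1, h2, h3⟩)
    · exact Or.inl rfl
    · exact Or.inr ⟨hsymm _ _ h1, h3, h2⟩
  · rintro x y z (rfl | ⟨h1, h2, h3⟩)
    · exact id
    · rintro (rfl | ⟨h4, h5, h6⟩)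
      · exact Or.inr ⟨h1, h2, h3⟩
      · exact Or.inr ⟨htrans _ _ _ h1 h4, h2, h6⟩

theorem resRel_finite {X : Type*} (Z : Set X) (S : X → X → Prop)
    (h : ∀ x, {y | S x y}.Finite) (x : X) : {y | resRel Z S x y}.Finite := by
  refine ((h x).union (finite_singleton x)).subset ?_
  rintro y (rfl | h)
  · exact Or.inr rfl
  · exact Or.inl h.1

theorem resRel_gen {X : Type*} [MeasurableSpace X] (Z : Set X) (hZ : MeasurableSet Z)
    (S : X → X → Prop)
    (γ : ℕ → X → X) (hγ : ∀ j, Measurable (γ j))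
    (h : ∀ x ∈ Z, ∀ y, S x y ↔ ∃ j, γ j x = y) : GenBy (resRel Z S) := by
  classical
  refine genBy_of_countable (ι := Option ℕ) (fun o => match o with
    | none => id
    | some j => fun x => if x ∈ Z ∧ γ j x ∈ Z then γ j x else x) ?_ ?_
  · rintro (_ | j)
    · exact measurable_id
    · exact Measurable.ite (hZ.inter ((hγ j) hZ)) (hγ j) measurable_id
  · intro x y
    rw [Option.exists]
    constructor
    · rintro (rfl | ⟨h1, h2, h3⟩)
      · exact Or.inl rfl
      · obtain ⟨j, rfl⟩ := (h x h2 y).1 h1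
        exact Or.inr ⟨j, if_pos ⟨h2, h3⟩⟩
    · rintro (h1 | ⟨j, hj⟩)
      · exact Or.inl h1
      · by_cases hc : x ∈ Z ∧ γ j x ∈ Z
        · simp only [if_pos hc] at hj
          subst hj
          exact Or.inr ⟨(h x hc.1 _).2 ⟨j, rfl⟩, hc.1, hc.2⟩
        · simp only [if_neg hc] at hj
          exact Or.inl hj

theorem conull_sub {X : Type*} [MeasurableSpace X] {μ : Measure X} {P : X → Prop}
    (h : ∀ᵐ x ∂μ, P x) : ∃ Z, MeasurableSet Z ∧ μ Zᶜ = 0 ∧ ∀ x ∈ Z, P x := by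
  refine ⟨(toMeasurable μ {x | ¬ P x})ᶜ, (measurableSet_toMeasurable _ _).compl, ?_, ?_⟩
  · rw [compl_compl, measure_toMeasurable]
    exact h
  · intro x hx
    by_contra hP
    exact hx (subset_toMeasurable μ _ hP)

theorem exists_sel {X : Type*} [MeasurableSpace X] [StandardBorelSpace X]
    (μ : Measure X) [IsFiniteMeasure μ] (S : X → X → Prop) (hS : Equivalence S)
    (hm : MeasurableSet {p : X × X | S p.1 p.2}) (hfin : ∀ x, {y | S x y}.Finite) :
    ∃ γ : ℕ → X → X, (∀ j, Measurable (γ j)) ∧ ∃ Z, MeasurableSet Z ∧ μ Zᶜ = 0 ∧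
      ∀ x ∈ Z, ∀ y, S x y ↔ ∃ j, γ j x = y := by
  let := upgradeStandardBorel X
  have hιe := measurableEmbedding_embeddingReal X
  set ι : X → ℝ := embeddingReal X with hι
  have ex : ∀ (q : ℚ) (x : X), ∃ z, S x z ∧ ((∃ y, S x y ∧ (q:ℝ) ≤ ι y) → (q:ℝ) ≤ ι z ∧
      ∀ y, S x y → (q:ℝ) ≤ ι y → ι z ≤ ι y) ∧ ((¬ ∃ y, S x y ∧ (q:ℝ) ≤ ι y) → z = x) := by
    intro q x
    by_cases hne : ∃ y, S x y ∧ (q:ℝ) ≤ ι y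
    · have hf : {y | S x y ∧ (q:ℝ) ≤ ι y}.Finite := (hfin x).subset (fun y hy => hy.1)
      obtain ⟨z, hz, hmin⟩ := Set.exists_min_image _ ι hf hne
      exact ⟨z, hz.1, fun _ => ⟨hz.2, fun y h1 h2 => hmin y ⟨h1, h2⟩⟩, fun h => absurd hne h⟩
    · exact ⟨x, hS.refl x, fun h => absurd h hne, fun _ => rfl⟩
  choose g hgS hg1 hg2 using ex
  have hproj : ∀ (P : Set X), MeasurableSet P → NullMeasurableSet {x | ∃ y, S x y ∧ y ∈ P} μ := by
    intro P hP
    have : {x | ∃ y, S x y ∧ y ∈ P} = Prod.fst '' ({p : X × X | S p.1 p.2} ∩ Prod.snd ⁻¹' P) := by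
      ext x
      constructor
      · rintro ⟨y, h1, h2⟩
        exact ⟨(x, y), ⟨h1, h2⟩, rfl⟩
      · rintro ⟨⟨a, b⟩, ⟨h1, h2⟩, rfl⟩
        exact ⟨b, h1, h2⟩
    rw [this]
    exact analytic_nullMeasurable μ _
      ((hm.inter (measurable_snd hP)).analyticSet_image measurable_fst)
  have hgm : ∀ q, AEMeasurable (g q) μ := by
    intro q
    rw [← hιe.aemeasurable_comp_iff]
    apply NullMeasurable.aemeasurable
    have : @Measurable (NullMeasurableSpace X μ) ℝ _ _ (ι ∘ g q) := by
      refine measurable_of_Iio (fun r => ?_)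
      have h1 := hproj (ι ⁻¹' (Ico q r)) (hιe.measurable measurableSet_Ico)
      have h2 := hproj (ι ⁻¹' (Ici q)) (hιe.measurable measurableSet_Ici)
      have h3 : NullMeasurableSet (ι ⁻¹' (Iio r)) μ :=
        (hιe.measurable measurableSet_Iio).nullMeasurableSet
      have h4 := h1.union (h2.compl.inter h3)
      have heq : (ι ∘ g q) ⁻¹' Iio r = {x | ∃ y, S x y ∧ y ∈ ι ⁻¹' (Ico q r)} ∪
        ({x | ∃ y, S x y ∧ y ∈ ι ⁻¹' (Ici q)}ᶜ ∩ ι ⁻¹' (Iio r)) := by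
        ext x
        constructor
        · intro hx
          by_cases hne : ∃ y, S x y ∧ (q:ℝ) ≤ ι y
          · exact Or.inl ⟨g q x, hgS q x, (hg1 q x hne).1, hx⟩
          · refine Or.inr ⟨hne, ?_⟩
            have := hg2 q x hne
            have hx : ι (g q x) < r := hx
            rw [this] at hx
            exact hx
        · rintro (⟨y, h1, h2, h3⟩ | ⟨h1, h2⟩)
          · exact lt_of_le_of_lt ((hg1 q x ⟨y, h1, h2⟩).2 y h1 h2) h3
          · have := hg2 q x h1
            change ι (g q x) < r
            rw [this]
            exact h2
      rw [← heq] at h4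
      exact h4
    exact this
  have hae : ∀ᵐ x ∂μ, ∀ q, g q x = (hgm q).mk (g q) x := ae_all_iff.2 fun q => (hgm q).ae_eq_mk
  obtain ⟨Z, hZm, hZ0, hZ⟩ := conull_sub hae
  obtain ⟨e, he⟩ := exists_surjective_nat ℚ
  refine ⟨fun n => (hgm (e n)).mk _, fun n => (hgm (e n)).measurable_mk, Z, hZm, hZ0, ?_⟩
  intro x hx y
  rw [← he.exists (p := fun q => (hgm q).mk (g q) x = y)]
  simp_rw [← hZ x hx]
  constructor
  · intro hxy
    have hf : {z | S x z ∧ ι z < ι y}.Finite := (hfin x).subset (fun z hz => hz.1)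
    have : ∃ q : ℚ, (q:ℝ) ≤ ι y ∧ ∀ z, S x z → ι z < ι y → ι z < q := by
      by_cases hne : {z | S x z ∧ ι z < ι y}.Nonempty
      · obtain ⟨w, hw, hmax⟩ := Set.exists_max_image _ ι hf hne
        obtain ⟨q, h1, h2⟩ := exists_rat_btwn hw.2
        exact ⟨q, h2.le, fun z h3 h4 => (hmax z ⟨h3, h4⟩).trans_lt h1⟩
      · obtain ⟨q, hq⟩ := exists_rat_lt (ι y)
        exact ⟨q, hq.le, fun z h1 h2 => absurd ⟨z, h1, h2⟩ hne⟩
    obtain ⟨q, h1, h2⟩ := this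
    refine ⟨q, hιe.injective ?_⟩
    have := hg1 q x ⟨y, hxy, h1⟩
    refine le_antisymm (this.2 y hxy h1) ?_
    by_contra hlt
    push Not at hlt
    exact absurd this.1 (not_le.2 (h2 _ (hgS q x) hlt))
  · rintro ⟨q, rfl⟩
    exact hgS q x

theorem step1 {X : Type*} [MeasurableSpace X] [StandardBorelSpace X]
    (μ : Measure X) [IsFiniteMeasure μ] (R : X → X → Prop) (hR : Equivalence R)
    (hhyp : HyperfiniteRel μ R) :
    ∃ (S : ℕ → X → X → Prop) (Z : Set X), (∀ n, Equivalence (S n)) ∧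
      (∀ n x y, S n x y → S (n+1) x y) ∧ (∀ n x, {y | S n x y}.Finite) ∧
      (∀ n, GenBy (S n)) ∧ (∀ n x y, S n x y → R x y) ∧ MeasurableSet Z ∧ μ Zᶜ = 0 ∧
      ∀ x ∈ Z, ∀ y ∈ Z, R x y → ∃ n, S n x y := by
  obtain ⟨X₀, S, hX₀, hX0, hSm, hrefl, hsymm, htrans, hdom, hfin, hinc, hRS⟩ := hhyp
  have hSdiag : ∀ n, {p : X × X | resRel X₀ (S n) p.1 p.2} =
      {p : X × X | p.1 = p.2} ∪ {p : X × X | S n p.1 p.2} := by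
    intro n
    ext ⟨x, y⟩
    constructor
    · rintro (h | h)
      · exact Or.inl h
      · exact Or.inr h.1
    · rintro (h | h)
      · exact Or.inl h
      · exact Or.inr ⟨h, hdom _ _ _ h⟩
  have hsel := fun n => exists_sel μ (resRel X₀ (S n)) (resRel_equiv _ _ (hsymm n) (htrans n))
    (by rw [hSdiag]; exact measurableSet_diagonal.union (hSm n)) (resRel_finite _ _ (hfin n))
  choose γ hγ Z hZm hZ0 hZ using hsel
  let W := X₀ ∩ ⋂ n, Z n
  have hW : MeasurableSet W := hX₀.inter (MeasurableSet.iInter hZm)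
  refine ⟨fun n => resRel W (S n), W, fun n => resRel_equiv _ _ (hsymm n) (htrans n), ?_,
    fun n => resRel_finite _ _ (hfin n), ?_, ?_, hW, ?_, ?_⟩
  · rintro n x y (h | ⟨h1, h2⟩)
    · exact Or.inl h
    · exact Or.inr ⟨hinc _ _ _ h1, h2⟩
  · intro n
    refine resRel_gen W hW (S n) (γ n) (hγ n) ?_
    intro x hx y
    rw [← hZ n x (mem_iInter.1 hx.2 n) y]
    constructor
    · intro h; exact Or.inr ⟨h, hdom _ _ _ h⟩
    · rintro (rfl | h)
      · exact hrefl _ _ hx.1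
      · exact h.1
  · rintro n x y (rfl | ⟨h1, h2⟩)
    · exact hR.refl _
    · exact (hRS x (hdom _ _ _ h1).1 y (hdom _ _ _ h1).2).2 ⟨n, h1⟩
  · rw [compl_inter, compl_iInter]
    exact measure_union_null hX0 (measure_iUnion_null hZ0)
  · intro x hx y hy h
    obtain ⟨n, hn⟩ := (hRS x hx.1 y hy.1).1 h
    exact ⟨n, Or.inr ⟨hn, hx, hy⟩⟩

end

section
open MeasureTheory Set Filter Topology
open scoped ENNReal

theorem count_eq {X : Type*} (S : X → X → Prop) (γ : ℕ → X → X)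
    (h : ∀ x y, S x y ↔ ∃ j, γ j x = y) (x : X) (P : X → Prop) :
    (({y | S x y ∧ P y}.encard : ℕ∞) : ℝ≥0∞) =
      ∑' j, {j | (∀ i < j, γ i x ≠ γ j x) ∧ P (γ j x)}.indicator (fun _ => (1 : ℝ≥0∞)) j := by
  rw [← tsum_subtype, ENNReal.tsum_set_one]
  congr 1
  have : {y | S x y ∧ P y} = (fun j => γ j x) '' {j | (∀ i < j, γ i x ≠ γ j x) ∧ P (γ j x)} := by
    classical
    ext y
    constructor
    · rintro ⟨h1, h2⟩
      have hex := (h x y).1 h1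
      refine ⟨Nat.find hex, ⟨?_, ?_⟩, Nat.find_spec hex⟩
      · intro i hi
        rw [Nat.find_spec hex]
        exact Nat.find_min hex hi
      · rw [Nat.find_spec hex]; exact h2
    · rintro ⟨j, ⟨h1, h2⟩, rfl⟩
      exact ⟨(h _ _).2 ⟨j, rfl⟩, h2⟩
  rw [this, InjOn.encard_image]
  intro i hi j hj hij
  rcases lt_trichotomy i j with hlt | heq | hlt
  · exact absurd hij (hj.1 i hlt)
  · exact heq
  · exact absurd hij.symm (hi.1 j hlt)

theorem measurableSet_first {X : Type*} [MeasurableSpace X] [StandardBorelSpace X]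
    (γ : ℕ → X → X) (hγ : ∀ j, Measurable (γ j)) (j : ℕ) :
    MeasurableSet {x | ∀ i < j, γ i x ≠ γ j x} := by
  have : {x | ∀ i < j, γ i x ≠ γ j x} = ⋂ i, ⋂ (_ : i < j), {x | γ i x = γ j x}ᶜ := by
    ext x; simp
  rw [this]
  exact MeasurableSet.iInter fun i => MeasurableSet.iInter fun _ =>
    (measurableSet_eq_fun (hγ i) (hγ j)).compl

theorem measurable_count {X : Type*} [MeasurableSpace X] [StandardBorelSpace X]
    (S : X → X → Prop) (hS : GenBy S) (P : Set (X × X)) (hP : MeasurableSet P) :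
    Measurable (fun x => (({y | S x y ∧ (x, y) ∈ P}.encard : ℕ∞) : ℝ≥0∞)) := by
  obtain ⟨γ, hγ, h⟩ := hS
  have : (fun x => (({y | S x y ∧ (x, y) ∈ P}.encard : ℕ∞) : ℝ≥0∞)) = fun x =>
      ∑' j, ({x | ∀ i < j, γ i x ≠ γ j x} ∩ (fun x => (x, γ j x)) ⁻¹' P).indicator
        (fun _ => (1 : ℝ≥0∞)) x := by
    funext x
    rw [count_eq S γ h x (fun y => (x, y) ∈ P)]
    rfl
  rw [this]
  exact Measurable.ennreal_tsum fun j => measurable_const.indicator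
    ((measurableSet_first γ hγ j).inter ((measurable_id.prodMk (hγ j)) hP))

theorem qi_sat {X : Type*} [MeasurableSpace X] [StandardBorelSpace X]
    (μ : Measure X) (S : X → X → Prop) (hS : Equivalence S)
    (hqi : QuasiInvariantRel μ S) (γ : ℕ → X → X) (hγ : ∀ j, Measurable (γ j))
    (h : ∀ x y, S x y ↔ ∃ j, γ j x = y) (B : Set X) (hB : MeasurableSet B) (h0 : μ B = 0) :
    μ {x | ∃ y ∈ B, S x y} = 0 := by
  have hsub : {x | ∃ y ∈ B, S x y} ⊆ ⋃ i, ⋃ k, γ i '' (B ∩ {x | γ k (γ i x) = x}) := by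
    rintro x ⟨y, hy, hxy⟩
    obtain ⟨i, rfl⟩ := (h y x).1 (hS.symm hxy)
    obtain ⟨k, hk⟩ := (h _ _).1 hxy
    exact mem_iUnion.2 ⟨i, mem_iUnion.2 ⟨k, y, ⟨hy, hk⟩, rfl⟩⟩
  refine measure_mono_null hsub (measure_iUnion_null fun i => measure_iUnion_null fun k => ?_)
  refine hqi (γ i) _ (hγ i) (measurableSet_eq_fun ((hγ k).comp (hγ i)) measurable_id) ?_ ?_ B hB h0
  · intro a ha b hb hab
    rw [← show γ k (γ i a) = a from ha, ← show γ k (γ i b) = b from hb, hab]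
  · intro x _
    exact (h _ _).2 ⟨i, rfl⟩

/-- Radon-Nikodym property of `l` for `S`. -/
def RNProp {X : Type*} [MeasurableSpace X] (μ : Measure X) (S : X → X → Prop) (l : X → ℝ) : Prop :=
  ∀ (g : X → X) (B : Set X), Measurable g → MeasurableSet B → InjOn g B → (∀ x ∈ B, S x (g x)) →
    μ (g '' B) = ∫⁻ y in B, ENNReal.ofReal (Real.exp (l (g y) - l y)) ∂μ

theorem rn_exists {X : Type*} [MeasurableSpace X] [StandardBorelSpace X]
    (μ : Measure X) [IsFiniteMeasure μ] (S : X → X → Prop) (hS : Equivalence S)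
    (hfin : ∀ x, {y | S x y}.Finite) (hgen : GenBy S)
    (hqi : QuasiInvariantRel μ S) : ∃ l : X → ℝ, Measurable l ∧ RNProp μ S l := by
  have hcm := fun (B : Set X) (hB : MeasurableSet B) =>
    measurable_count S hgen (Prod.snd ⁻¹' B) (measurable_snd hB)
  let N : X → ℝ≥0∞ := fun x => (({y | S x y ∧ (x, y) ∈ Prod.snd ⁻¹' (univ : Set X)}.encard : ℕ∞) : ℝ≥0∞)
  have hNm : Measurable N := hcm univ MeasurableSet.univ
  have hN0 : ∀ x, N x ≠ 0 := by
    intro x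
    have : ({y | S x y ∧ (x, y) ∈ Prod.snd ⁻¹' (univ : Set X)}).encard ≠ 0 := by
      rw [Set.encard_ne_zero]
      exact ⟨x, hS.refl x, trivial⟩
    simpa [N] using this
  have hNt : ∀ x, N x ≠ ∞ := by
    intro x
    have : ({y | S x y ∧ (x, y) ∈ Prod.snd ⁻¹' (univ : Set X)}).encard ≠ ⊤ := by
      rw [Set.encard_ne_top_iff]
      exact (hfin x).subset (fun y hy => hy.1)
    simpa [N] using this
  have hNi : Measurable (fun x => (N x)⁻¹) := hNm.inv
  have hmB : ∀ B, MeasurableSet B → Measurable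
      (fun x => (N x)⁻¹ * (({y | S x y ∧ y ∈ B}.encard : ℕ∞) : ℝ≥0∞)) :=
    fun B hB => hNi.mul (hcm B hB)
  obtain ⟨γ, hγ, h⟩ := hgen
  let μ' := μ.withDensity (fun x => (N x)⁻¹)
  let A : ℕ → Set X := fun j => {x | ∀ i < j, γ i x ≠ γ j x}
  have hA : ∀ j, MeasurableSet (A j) := measurableSet_first γ hγ
  let κ : Measure X := Measure.sum fun j => (μ'.restrict (A j)).map (γ j)
  have hκ : ∀ B, MeasurableSet B → κ B =
      ∫⁻ x, (N x)⁻¹ * (({y | S x y ∧ y ∈ B}.encard : ℕ∞) : ℝ≥0∞) ∂μ := by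
    intro B hB
    rw [Measure.sum_apply _ hB]
    have h1 : ∀ j, ((μ'.restrict (A j)).map (γ j)) B =
        ∫⁻ x, (A j ∩ γ j ⁻¹' B).indicator (fun _ => (1 : ℝ≥0∞)) x ∂μ' := by
      intro j
      rw [Measure.map_apply (hγ j) hB, Measure.restrict_apply ((hγ j) hB),
        lintegral_indicator_const ((hA j).inter ((hγ j) hB)), one_mul, inter_comm]
    simp_rw [h1]
    rw [← lintegral_tsum fun j => (measurable_const.indicator
      ((hA j).inter ((hγ j) hB))).aemeasurable]
    rw [lintegral_withDensity_eq_lintegral_mul _ hNi (Measurable.ennreal_tsum fun j =>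
      measurable_const.indicator ((hA j).inter ((hγ j) hB)))]
    refine lintegral_congr fun x => ?_
    rw [count_eq S γ h x (fun y => y ∈ B)]
    rfl
  have hκfin : IsFiniteMeasure κ := by
    constructor
    rw [hκ _ MeasurableSet.univ]
    have : ∀ x, (N x)⁻¹ * (({y | S x y ∧ y ∈ univ}.encard : ℕ∞) : ℝ≥0∞) = 1 :=
      fun x => ENNReal.inv_mul_cancel (hN0 x) (hNt x)
    simp_rw [this]
    simp
  have hμκ : μ ≪ κ := by
    refine Measure.AbsolutelyContinuous.mk fun B hB hB0 => ?_
    rw [hκ B hB, lintegral_eq_zero_iff (hmB B hB)] at hB0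
    refine measure_mono_null ?_ hB0
    intro x hx hx0
    rcases mul_eq_zero.1 hx0 with h1 | h1
    · exact hNt x (ENNReal.inv_eq_zero.1 h1)
    · have h2 : ({y | S x y ∧ y ∈ B}).encard ≠ 0 := by
        rw [Set.encard_ne_zero]
        exact ⟨x, hS.refl x, hx⟩
      exact h2 (by simpa using h1)
  have hκμ : κ ≪ μ := by
    refine Measure.AbsolutelyContinuous.mk fun B hB hB0 => ?_
    rw [hκ B hB, lintegral_eq_zero_iff (hmB B hB)]
    refine measure_mono_null ?_ (qi_sat μ S hS hqi γ hγ h B hB hB0)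
    intro x hx
    by_contra hcon
    apply hx
    have h2 : {y | S x y ∧ y ∈ B} = ∅ := by
      ext y
      constructor
      · rintro ⟨h1, h2⟩
        exact hcon ⟨y, h2, h1⟩
      · exact fun h => h.elim
    change (N x)⁻¹ * (({y | S x y ∧ y ∈ B}.encard : ℕ∞) : ℝ≥0∞) = 0
    rw [h2]
    simp
  have hinv : ∀ (g : X → X) (B : Set X), Measurable g → MeasurableSet B → InjOn g B →
      (∀ x ∈ B, S x (g x)) → κ (g '' B) = κ B := by
    intro g B hg hB hinj hgS
    rw [hκ _ (hB.image_of_measurable_injOn hg hinj), hκ _ hB]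
    refine lintegral_congr fun x => ?_
    have : {y | S x y ∧ y ∈ g '' B} = g '' {y | S x y ∧ y ∈ B} := by
      ext y
      constructor
      · rintro ⟨h1, z, hz, rfl⟩
        exact ⟨z, ⟨hS.trans h1 (hS.symm (hgS z hz)), hz⟩, rfl⟩
      · rintro ⟨z, ⟨h1, hz⟩, rfl⟩
        exact ⟨hS.trans h1 (hgS z hz), z, hz, rfl⟩
    rw [this, InjOn.encard_image]
    exact hinj.mono fun y hy => hy.2
  -- the density
  let m₀ := μ.rnDeriv κ
  let l : X → ℝ := fun x => Real.log (m₀ x).toReal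
  have hlm : Measurable l := (Measure.measurable_rnDeriv μ κ).ennreal_toReal.log
  let m : X → ℝ≥0∞ := fun x => ENNReal.ofReal (Real.exp (l x))
  have hmm : Measurable m := hlm.exp.ennreal_ofReal
  have hm0 : m₀ =ᵐ[κ] m := by
    filter_upwards [hκμ.ae_le (Measure.rnDeriv_pos hμκ), Measure.rnDeriv_lt_top μ κ] with x h1 h2
    simp only [m, l]
    rw [Real.exp_log (ENNReal.toReal_pos h1.ne' h2.ne), ENNReal.ofReal_toReal h2.ne]
  have hμ : μ = κ.withDensity m := by
    rw [← withDensity_congr_ae hm0, Measure.withDensity_rnDeriv_eq _ _ hμκ]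
  refine ⟨l, hlm, ?_⟩
  intro g B hg hB hinj hgS
  have hgB := hB.image_of_measurable_injOn hg hinj
  have hmap : κ.restrict (g '' B) = (κ.restrict B).map g := by
    ext C hC
    rw [Measure.restrict_apply hC, Measure.map_apply hg hC, Measure.restrict_apply (hg hC),
      ← hinv g (g ⁻¹' C ∩ B) hg ((hg hC).inter hB) (hinj.mono inter_subset_right)
        (fun x hx => hgS x hx.2), inter_comm (g ⁻¹' C), image_inter_preimage, inter_comm]
  have e1 : μ (g '' B) = ∫⁻ y in B, m (g y) ∂κ := by
    conv_lhs => rw [hμ]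
    rw [withDensity_apply _ hgB, hmap, lintegral_map hmm hg]
  rw [e1]
  conv_rhs => rw [hμ]
  have hF : Measurable fun y => ENNReal.ofReal (Real.exp (l (g y) - l y)) :=
    ((hlm.comp hg).sub hlm).exp.ennreal_ofReal
  rw [restrict_withDensity hB, lintegral_withDensity_eq_lintegral_mul _ hmm hF]
  refine lintegral_congr fun y => ?_
  simp only [m, Pi.mul_apply]
  rw [← ENNReal.ofReal_mul (Real.exp_pos _).le, ← Real.exp_add]
  congr 2
  ring

theorem rn_unique {X : Type*} [MeasurableSpace X] [StandardBorelSpace X]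
    (μ : Measure X) [IsFiniteMeasure μ] (S : X → X → Prop) (hS : Equivalence S)
    (hgen : GenBy S) (l l' : X → ℝ) (hl : Measurable l) (hl' : Measurable l')
    (h1 : RNProp μ S l) (h2 : RNProp μ S l') :
    ∀ᵐ x ∂μ, ∀ y, S x y → l y - l x = l' y - l' x := by
  obtain ⟨γ, hγ, h⟩ := hgen
  have key : ∀ i k, ∀ᵐ x ∂μ, γ k (γ i x) = x → l (γ i x) - l x = l' (γ i x) - l' x := by
    intro i k
    have hC : MeasurableSet {x | γ k (γ i x) = x} :=
      measurableSet_eq_fun ((hγ k).comp (hγ i)) measurable_id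
    have hF : Measurable fun y => ENNReal.ofReal (Real.exp (l (γ i y) - l y)) :=
      ((hl.comp (hγ i)).sub hl).exp.ennreal_ofReal
    have hF' : Measurable fun y => ENNReal.ofReal (Real.exp (l' (γ i y) - l' y)) :=
      ((hl'.comp (hγ i)).sub hl').exp.ennreal_ofReal
    have hae : (fun y => ENNReal.ofReal (Real.exp (l (γ i y) - l y)))
        =ᵐ[μ.restrict {x | γ k (γ i x) = x}]
        (fun y => ENNReal.ofReal (Real.exp (l' (γ i y) - l' y))) := by
      refine ae_eq_of_forall_setLIntegral_eq_of_sigmaFinite hF hF' ?_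
      intro s hs _
      rw [Measure.restrict_restrict hs]
      have hinj : InjOn (γ i) (s ∩ {x | γ k (γ i x) = x}) := by
        intro a ha b hb hab
        rw [← show γ k (γ i a) = a from ha.2, ← show γ k (γ i b) = b from hb.2, hab]
      rw [← h1 (γ i) _ (hγ i) (hs.inter hC) hinj (fun x _ => (h _ _).2 ⟨i, rfl⟩),
        ← h2 (γ i) _ (hγ i) (hs.inter hC) hinj (fun x _ => (h _ _).2 ⟨i, rfl⟩)]
    rw [Filter.EventuallyEq, ae_restrict_iff' hC] at hae
    filter_upwards [hae] with x hx hxk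
    have := hx hxk
    rw [ENNReal.ofReal_eq_ofReal_iff (Real.exp_pos _).le (Real.exp_pos _).le,
      Real.exp_eq_exp] at this
    exact this
  have key' : ∀ᵐ x ∂μ, ∀ i k, γ k (γ i x) = x → l (γ i x) - l x = l' (γ i x) - l' x :=
    ae_all_iff.2 fun i => ae_all_iff.2 fun k => key i k
  filter_upwards [key'] with x hx y hxy
  obtain ⟨i, rfl⟩ := (h x y).1 hxy
  obtain ⟨k, hk⟩ := (h _ _).1 (hS.symm hxy)
  exact hx i k hk

end

section
open MeasureTheory Set Filter Topology
open scoped ENNReal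

theorem mono_rel {X : Type*} {S : ℕ → X → X → Prop} (h : ∀ n x y, S n x y → S (n+1) x y)
    {m n : ℕ} (hmn : m ≤ n) {x y : X} (hxy : S m x y) : S n x y := by
  induction hmn with
  | refl => exact hxy
  | step _ ih => exact h _ _ _ ih

theorem step2 {X : Type*} [MeasurableSpace X] [StandardBorelSpace X]
    (μ : Measure X) [IsFiniteMeasure μ] (R : X → X → Prop) (hR : Equivalence R)
    (hqi : QuasiInvariantRel μ R) (hhyp : HyperfiniteRel μ R) :
    ∃ (S : ℕ → X → X → Prop) (Z : Set X) (l : ℕ → X → ℝ), (∀ n, Equivalence (S n)) ∧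
      (∀ n x y, S n x y → S (n+1) x y) ∧ (∀ n x, {y | S n x y}.Finite) ∧
      (∀ n, GenBy (S n)) ∧ (∀ n x y, S n x y → R x y) ∧ MeasurableSet Z ∧ μ Zᶜ = 0 ∧
      (∀ x ∈ Z, ∀ y ∈ Z, R x y → ∃ n, S n x y) ∧
      (∀ n, Measurable (l n)) ∧ (∀ n, RNProp μ (S n) (l n)) ∧
      ∀ n x y, S n x y → l (n+1) x - l (n+1) y = l n x - l n y := by
  obtain ⟨S, Z, heq, hinc, hfin, hgen, hSR, hZm, hZ0, hZ⟩ := step1 μ R hR hhyp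
  have hrn := fun n => rn_exists μ (S n) (heq n) (hfin n) (hgen n)
    (fun g A hg hA hi hgr => hqi g A hg hA hi (fun x hx => hSR _ _ _ (hgr x hx)))
  choose l hlm hl using hrn
  have hae : ∀ᵐ x ∂μ, ∀ n, ∀ y, S n x y → l (n+1) y - l (n+1) x = l n y - l n x :=
    ae_all_iff.2 fun n => rn_unique μ (S n) (heq n) (hgen n) _ _ (hlm _) (hlm _)
      (fun g B hg hB hi hgr => hl (n+1) g B hg hB hi (fun x hx => hinc _ _ _ (hgr x hx))) (hl n)
  obtain ⟨W, hWm, hW0, hW⟩ := conull_sub hae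
  refine ⟨fun n => resRel W (S n), Z ∩ W, l,
    fun n => resRel_equiv _ _ (fun _ _ h => (heq n).symm h) (fun _ _ _ h h' => (heq n).trans h h'),
    ?_, fun n => resRel_finite _ _ (hfin n), ?_, ?_, hZm.inter hWm, ?_, ?_, hlm, ?_, ?_⟩
  · rintro n x y (h | ⟨h1, h2⟩)
    · exact Or.inl h
    · exact Or.inr ⟨hinc _ _ _ h1, h2⟩
  · intro n
    obtain ⟨γ, hγ, h⟩ := hgen n
    exact resRel_gen W hWm (S n) γ hγ (fun x _ y => h x y)
  · rintro n x y (rfl | ⟨h1, h2⟩)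
    · exact hR.refl _
    · exact hSR _ _ _ h1
  · rw [compl_inter]
    exact measure_union_null hZ0 hW0
  · intro x hx y hy h
    obtain ⟨n, hn⟩ := hZ x hx.1 y hy.1 h
    exact ⟨n, Or.inr ⟨hn, hx.2, hy.2⟩⟩
  · intro n g B hg hB hi hgr
    refine hl n g B hg hB hi (fun x hx => ?_)
    rcases hgr x hx with h | h
    · rw [← h]; exact (heq n).refl _
    · exact h.1
  · rintro n x y (rfl | ⟨h1, h2, h3⟩)
    · simp
    · have := hW x h2 n y h1
      linarith

/-- data for the coding construction -/
structure CoreHyp {X : Type*} [MeasurableSpace X] {G : Type*} [Group G] [TopologicalSpace G]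
    [MeasurableSpace G] (T : ℕ → X → X → Prop) (C : X → X → G) (K : ℕ → Set G)
    (M : ℕ → ℕ) : Prop where
  zero : ∀ x y, T 0 x y ↔ x = y
  eqv : ∀ n, Equivalence (T n)
  inc : ∀ n x y, T n x y → T (n+1) x y
  gen : ∀ n, GenBy (T n)
  card : ∀ n x, {y | T n x y}.encard ≤ M n
  comp : ∀ n, IsCompact (K n)
  mem : ∀ n x y, T n x y → C x y ∈ K n
  coc : ∀ n x y z, T n x y → T n y z → C x y * C y z = C x z
  meas : ∀ n (u v : X → X), Measurable u → Measurable v → (∀ x, T n (u x) (v x)) →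
    Measurable fun x => C (u x) (v x)

theorem trunc1 {X : Type*} [MeasurableSpace X] [StandardBorelSpace X]
    (μ : Measure X) [IsFiniteMeasure μ] {G : Type*} [Group G] [TopologicalSpace G]
    [T2Space G] [LocallyCompactSpace G] [SecondCountableTopology G] [MeasurableSpace G]
    [BorelSpace G] (Kc : CompactExhaustion G)
    (S : X → X → Prop) (heq : Equivalence S) (hfin : ∀ x, {y | S x y}.Finite) (hgen : GenBy S)
    (C : X → X → G) (hmeas : ∀ (u v : X → X), Measurable u → Measurable v → (∀ x, S (u x) (v x)) →
      Measurable fun x => C (u x) (v x)) (ε : ℝ≥0∞) (hε : 0 < ε) :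
    ∃ (k : ℕ) (Y : Set X), MeasurableSet Y ∧ μ Yᶜ < ε ∧ (∀ x y, S x y → x ∈ Y → y ∈ Y) ∧
      (∀ x ∈ Y, {y | S x y}.encard ≤ k) ∧ (∀ x y, S x y → x ∈ Y → C x y ∈ Kc k) := by
  let Y : ℕ → Set X := fun k => {x | {y | S x y}.encard ≤ k ∧ ∀ y z, S x y → S x z → C y z ∈ Kc k}
  have hcm : Measurable fun x => (({y | S x y}.encard : ℕ∞) : ℝ≥0∞) := by
    simpa using measurable_count S hgen univ MeasurableSet.univ
  have hYm : ∀ k, MeasurableSet (Y k) := by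
    intro k
    obtain ⟨γ, hγ, h⟩ := hgen
    have h1 : MeasurableSet {x | (({y | S x y}.encard : ℕ∞) : ℝ≥0∞) ≤ (k : ℝ≥0∞)} :=
      hcm measurableSet_Iic
    have h2 : ∀ i j, MeasurableSet {x | C (γ i x) (γ j x) ∈ Kc k} := fun i j =>
      (hmeas (γ i) (γ j) (hγ i) (hγ j) (fun x =>
        heq.trans (heq.symm ((h _ _).2 ⟨i, rfl⟩)) ((h _ _).2 ⟨j, rfl⟩)))
        (Kc.isCompact k).isClosed.measurableSet
    have : Y k = {x | (({y | S x y}.encard : ℕ∞) : ℝ≥0∞) ≤ (k : ℝ≥0∞)} ∩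
        ⋂ i, ⋂ j, {x | C (γ i x) (γ j x) ∈ Kc k} := by
      ext x
      simp only [Y, mem_inter_iff, mem_iInter, mem_ofPred_eq]
      refine and_congr ?_ ?_
      · rw [← ENat.toENNReal_coe, ENat.toENNReal_le]
      · constructor
        · intro hx i j
          exact hx _ _ ((h _ _).2 ⟨i, rfl⟩) ((h _ _).2 ⟨j, rfl⟩)
        · intro hx y z hy hz
          obtain ⟨i, rfl⟩ := (h _ _).1 hy
          obtain ⟨j, rfl⟩ := (h _ _).1 hz
          exact hx i j
    rw [this]
    exact h1.inter (MeasurableSet.iInter fun i => MeasurableSet.iInter fun j => h2 i j)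
  have hmono : Monotone Y := by
    intro k k' hk x hx
    exact ⟨hx.1.trans (by exact_mod_cast hk), fun y z hy hz => Kc.subset hk (hx.2 y z hy hz)⟩
  have hun : ∀ x, ∃ k, x ∈ Y k := by
    intro x
    have hf2 : ((fun p : X × X => Kc.find (C p.1 p.2)) '' ({y | S x y} ×ˢ {y | S x y})).Finite :=
      ((hfin x).prod (hfin x)).image _
    obtain ⟨k, hk⟩ := hf2.bddAbove
    refine ⟨max k ({y | S x y}.ncard), ?_, ?_⟩
    · rw [← (hfin x).cast_ncard_eq]
      exact_mod_cast le_max_right _ _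
    · intro y z hy hz
      have : Kc.find (C y z) ≤ k := hk ⟨(y, z), ⟨hy, hz⟩, rfl⟩
      exact Kc.mem_iff_find_le.2 (this.trans (le_max_left _ _))
  have hlim : Tendsto (fun k => μ (Y k)ᶜ) atTop (𝓝 (μ (⋂ k, (Y k)ᶜ))) := by
    refine tendsto_measure_iInter_atTop (fun k => (hYm k).compl.nullMeasurableSet) ?_
      ⟨0, measure_ne_top _ _⟩
    intro k k' hk
    exact compl_subset_compl.2 (hmono hk)
  have h0 : (⋂ k, (Y k)ᶜ) = ∅ := by
    rw [← compl_iUnion, compl_empty_iff, eq_univ_iff_forall]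
    exact fun x => mem_iUnion.2 (hun x)
  rw [h0, measure_empty] at hlim
  obtain ⟨k, hk⟩ := (hlim.eventually (gt_mem_nhds hε)).exists
  refine ⟨k, Y k, hYm k, hk, ?_, fun x hx => hx.1, ?_⟩
  · intro x y hxy hx
    have : {z | S y z} = {z | S x z} := by
      ext z
      exact ⟨fun h => heq.trans hxy h, fun h => heq.trans (heq.symm hxy) h⟩
    refine ⟨?_, fun a b ha hb => hx.2 a b (heq.trans hxy ha) (heq.trans hxy hb)⟩
    rw [this]; exact hx.1
  · intro x y hxy hx
    exact hx.2 x y (heq.refl x) hxy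

theorem trunc {X : Type*} [MeasurableSpace X] [StandardBorelSpace X]
    (μ : Measure X) [IsFiniteMeasure μ] {G : Type*} [Group G] [TopologicalSpace G]
    [T2Space G] [LocallyCompactSpace G] [SecondCountableTopology G] [MeasurableSpace G]
    [BorelSpace G] 
    (S : ℕ → X → X → Prop) (heq : ∀ n, Equivalence (S n))
    (hinc : ∀ n x y, S n x y → S (n+1) x y)
    (hfin : ∀ n x, {y | S n x y}.Finite) (hgen : ∀ n, GenBy (S n))
    (C : X → X → G) (hmeas : ∀ n (u v : X → X), Measurable u → Measurable v →
      (∀ x, S n (u x) (v x)) → Measurable fun x => C (u x) (v x))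
    (hcoc : ∀ n x y z, S n x y → S n y z → C x y * C y z = C x z) :
    ∃ (T : ℕ → X → X → Prop) (K : ℕ → Set G) (M : ℕ → ℕ) (W : Set X), CoreHyp T C K M ∧
      (∀ n x y, T n x y → S n x y) ∧ MeasurableSet W ∧ μ Wᶜ = 0 ∧
      ∀ x ∈ W, ∀ n y, S n x y → ∃ m, T m x y := by
  classical
  let Kc : CompactExhaustion G := default
  obtain ⟨ε, hε, hsum⟩ := ENNReal.exists_pos_sum_of_countable' one_ne_zero ℕ
  have := fun n => trunc1 μ Kc (S n) (heq n) (hfin n) (hgen n) C (hmeas n) (ε n) (hε n)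
  choose k Y hYm hYε hYinv hYc hYK using this
  have hbc : ∀ᵐ x ∂μ, ∀ᶠ n in atTop, x ∉ (Y n)ᶜ := by
    refine ae_eventually_notMem ?_
    exact ((ENNReal.tsum_le_tsum fun n => (hYε n).le).trans_lt (hsum.trans ENNReal.one_lt_top)).ne
  obtain ⟨W, hWm, hW0, hW⟩ := conull_sub hbc
  let T : ℕ → X → X → Prop := fun n x y => x = y ∨ ∃ m < n, S m x y ∧ x ∈ Y m
  have hTS : ∀ n x y, T n x y → S n x y := by
    rintro n x y (rfl | ⟨m, hm, h, -⟩)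
    · exact (heq n).refl _
    · exact mono_rel hinc hm.le h
  have hTinc : ∀ n x y, T n x y → T (n+1) x y := by
    rintro n x y (rfl | ⟨m, hm, h⟩)
    · exact Or.inl rfl
    · exact Or.inr ⟨m, by omega, h⟩
  refine ⟨T, fun n => {1} ∪ ⋃ m ∈ Finset.range n, Kc (k m), fun n => 1 + ∑ m ∈ Finset.range n, k m,
    W, ⟨?_, ?_, hTinc, ?_, ?_, ?_, ?_, fun n x y z h h' => hcoc n x y z (hTS _ _ _ h) (hTS _ _ _ h'),
    fun n u v hu hv h => hmeas n u v hu hv (fun x => hTS _ _ _ (h x))⟩, hTS, hWm, hW0, ?_⟩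
  · intro x y
    simp [T]
  · intro n
    refine ⟨fun x => Or.inl rfl, ?_, ?_⟩
    · rintro x y (rfl | ⟨m, hm, h1, h2⟩)
      · exact Or.inl rfl
      · exact Or.inr ⟨m, hm, (heq m).symm h1, hYinv _ _ _ h1 h2⟩
    · rintro x y z (rfl | ⟨m, hm, h1, h2⟩)
      · exact id
      · rintro (rfl | ⟨m', hm', h1', h2'⟩)
        · exact Or.inr ⟨m, hm, h1, h2⟩
        · rcases le_total m m' with hle | hle
          · have h3 := mono_rel hinc hle h1
            exact Or.inr ⟨m', hm', (heq m').trans h3 h1', hYinv _ _ _ ((heq m').symm h3) h2'⟩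
          · exact Or.inr ⟨m, hm, (heq m).trans h1 (mono_rel hinc hle h1'), h2⟩
  · intro n
    choose γ hγ hγS using hgen
    refine genBy_of_countable (ι := Option (ℕ × ℕ)) (fun o => match o with
      | none => id
      | some p => fun x => if x ∈ {x | p.1 < n ∧ x ∈ Y p.1} then γ p.1 p.2 x else x) ?_ ?_
    · rintro (_ | p)
      · exact measurable_id
      · exact Measurable.ite ((MeasurableSet.const _).inter (hYm p.1)) (hγ _ _) measurable_id
    · intro x y
      rw [Option.exists]
      constructor
      · rintro (rfl | ⟨m, hm, h1, h2⟩)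
        · exact Or.inl rfl
        · obtain ⟨j, rfl⟩ := (hγS m _ _).1 h1
          exact Or.inr ⟨(m, j), if_pos ⟨hm, h2⟩⟩
      · rintro (h1 | ⟨⟨m, j⟩, hj⟩)
        · exact Or.inl h1
        · by_cases hc : x ∈ {x | m < n ∧ x ∈ Y m}
          · simp only [if_pos hc] at hj
            subst hj
            exact Or.inr ⟨m, hc.1, (hγS m _ _).2 ⟨j, rfl⟩, hc.2⟩
          · simp only [if_neg hc] at hj
            exact Or.inl hj
  · intro n x
    induction n with
    | zero =>
      have : {y | T 0 x y} = {x} := by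
        ext y; simp [T, eq_comm]
      rw [this]; simp
    | succ n ih =>
      have : {y | T (n+1) x y} ⊆ {y | T n x y} ∪ {y | S n x y ∧ x ∈ Y n} := by
        rintro y (rfl | ⟨m, hm, h⟩)
        · exact Or.inl (Or.inl rfl)
        · rcases Nat.lt_succ_iff_lt_or_eq.1 hm with h1 | rfl
          · exact Or.inl (Or.inr ⟨m, h1, h⟩)
          · exact Or.inr h
      refine (encard_le_encard this).trans ((encard_union_le _ _).trans ?_)
      rw [Finset.sum_range_succ, ← add_assoc]
      push_cast
      push_cast at ih
      refine add_le_add ih ?_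
      by_cases hx : x ∈ Y n
      · simpa [hx] using hYc n x hx
      · simp [hx]
  · intro n
    refine isCompact_singleton.union ?_
    exact (Finset.range n).isCompact_biUnion fun m _ => Kc.isCompact _
  · rintro n x y (rfl | ⟨m, hm, h1, h2⟩)
    · have := hcoc n x x x ((heq n).refl x) ((heq n).refl x)
      left
      simpa using this
    · right
      simp only [mem_iUnion]
      exact ⟨m, Finset.mem_range.2 hm, hYK m x y h1 h2⟩
  · intro x hx n y hxy
    obtain ⟨m, hm, hm'⟩ := ((hW x hx).and (eventually_ge_atTop n)).exists
    exact ⟨m+1, Or.inr ⟨m, by omega, mono_rel hinc hm' hxy, not_not.1 hm⟩⟩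

end

section
open MeasureTheory Set Filter Topology
open scoped ENNReal Pointwise

theorem approx_one {G : Type*} [Group G] [TopologicalSpace G] [IsTopologicalGroup G]
    [T2Space G] [SecondCountableTopology G] [MeasurableSpace G]
    [BorelSpace G] (P K U : Set G) (hP : IsCompact P) (hK : IsCompact K) (hU : U ∈ 𝓝 (1 : G)) :
    ∃ (α : G → ℕ) (β : ℕ → G) (N : ℕ), Measurable α ∧ (∀ a, α a < N) ∧ (∀ i, β i ∈ insert 1 K) ∧
      ∀ g ∈ P, ∀ a ∈ K, g * (β (α a) * a⁻¹) * g⁻¹ ∈ U := by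
  classical
  have hW : ∀ᶠ w in 𝓝 (1 : G), ∀ g ∈ P, g * w * g⁻¹ ∈ U := by
    refine hP.eventually_forall_of_forall_eventually (P := fun w g => g * w * g⁻¹ ∈ U) ?_
    intro g _
    have hc : Continuous (fun z : G × G => z.2 * z.1 * z.2⁻¹) := by fun_prop
    have := hc.tendsto ((1 : G), g)
    simp only [mul_one, mul_inv_cancel] at this
    exact this.eventually hU
  obtain ⟨W, hWs, hWo, hW1⟩ := mem_nhds_iff.1 hW
  have hopen : ∀ a : G, IsOpen {a' | a * a'⁻¹ ∈ W} := fun a =>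
    hWo.preimage (by fun_prop : Continuous fun a' => a * a'⁻¹)
  obtain ⟨t, htK, ht⟩ := hK.elim_nhds_subcover (fun a => {a' | a * a'⁻¹ ∈ W})
    (fun a _ => (hopen a).mem_nhds (by simpa using hW1))
  let β : ℕ → G := fun i => if h : i < t.card then (t.equivFin.symm ⟨i, h⟩ : G) else 1
  have hp : ∀ a : G, ∃ i, i = t.card ∨ (β i * a⁻¹ ∈ W) := fun a => ⟨_, Or.inl rfl⟩
  refine ⟨fun a => Nat.find (hp a), β, t.card + 1, ?_, ?_, ?_, ?_⟩
  · refine measurable_find hp fun k => ?_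
    exact (MeasurableSet.const _).union (hopen (β k)).measurableSet
  · intro a
    exact Nat.lt_succ_of_le (Nat.find_min' (hp a) (Or.inl rfl))
  · intro i
    by_cases h : i < t.card
    · right
      simp only [β, dif_pos h]
      exact htK _ (t.equivFin.symm ⟨i, h⟩).2
    · left
      simp only [β, dif_neg h]
  · intro g hg a ha
    refine hWs ?_ g hg
    have h2 : ∃ i < t.card, β i * a⁻¹ ∈ W := by
      obtain ⟨s, hs, has⟩ := mem_iUnion₂.1 (ht ha)
      refine ⟨t.equivFin ⟨s, hs⟩, (t.equivFin ⟨s, hs⟩).2, ?_⟩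
      simpa [β] using has
    obtain ⟨i, hi, hiW⟩ := h2
    have h3 : Nat.find (hp a) ≤ i := Nat.find_min' _ (Or.inr hiW)
    rcases Nat.find_spec (hp a) with h | h
    · omega
    · exact h

theorem group_seq {G : Type*} [Group G] [TopologicalSpace G] [IsTopologicalGroup G]
    [T2Space G] [LocallyCompactSpace G] [SecondCountableTopology G] [MeasurableSpace G]
    [BorelSpace G] (K : ℕ → Set G) (hK : ∀ n, IsCompact (K n)) :
    ∃ (Q : Set G) (α : ℕ → G → ℕ) (β : ℕ → ℕ → G) (N : ℕ → ℕ), IsCompact Q ∧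
      (∀ n, Measurable (α n)) ∧ (∀ n a, α n a < N n) ∧
      ∀ a : ℕ → G, (∀ n, a n ∈ K n) → ∃ b ∈ Q, Tendsto (fun n =>
        ((List.range n).map fun k => β k (α k (a k))).prod * (((List.range n).map a).prod)⁻¹)
        atTop (𝓝 b) := by
  obtain ⟨u, hu, hu2⟩ := IsTopologicalGroup.exists_antitone_basis_nhds_one G
  obtain ⟨Q, hQ, hQ1⟩ := exists_compact_mem_nhds (1 : G)
  obtain ⟨m₀, -, hm₀⟩ := hu.toHasBasis.mem_iff.1 hQ1
  let U : ℕ → Set G := fun n => u (n + m₀)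
  have hU : ∀ n, U n ∈ 𝓝 (1 : G) := fun n => hu.toHasBasis.mem_of_mem trivial
  have hU1 : ∀ n, (1 : G) ∈ U n := fun n => mem_of_mem_nhds (hU n)
  have hUU : ∀ n a b, a ∈ U (n+1) → b ∈ U (n+1) → a * b ∈ U n := by
    intro n a b ha hb
    apply hu2 (n + m₀)
    have e : n + m₀ + 1 = n + 1 + m₀ := by omega
    rw [e]
    exact mul_mem_mul ha hb
  have hUanti : Antitone U := fun i j h => hu.antitone (by omega)
  have hU0Q : U 0 ⊆ Q := by simpa [U] using hm₀
  let P : ℕ → Set G := fun n => Nat.rec {1} (fun n Pn => Pn * insert 1 (K n)) n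
  have hP : ∀ n, IsCompact (P n) := by
    intro n
    induction n with
    | zero => exact isCompact_singleton
    | succ n ih => exact ih.mul ((hK n).insert 1)
  have := fun n => approx_one (P n) (K n) (U (n+1)) (hP n) (hK n) (hU _)
  choose α β N hα hN hβ hαβ using this
  refine ⟨Q, α, β, N, hQ, hα, hN, ?_⟩
  intro a ha
  set F : ℕ → G := fun n => ((List.range n).map fun k => β k (α k (a k))).prod with hF
  set Φ : ℕ → G := fun n => ((List.range n).map a).prod with hΦ
  have hFs : ∀ n, F (n+1) = F n * β n (α n (a n)) := by
    intro n; simp [hF, List.range_succ]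
  have hΦs : ∀ n, Φ (n+1) = Φ n * a n := by
    intro n; simp [hΦ, List.range_succ]
  have hFP : ∀ n, F n ∈ P n := by
    intro n
    induction n with
    | zero => simp [hF, P]
    | succ n ih => rw [hFs]; exact mul_mem_mul ih (hβ n _)
  set bb : ℕ → G := fun n => F n * (Φ n)⁻¹ with hbb
  have hstep : ∀ n, bb (n+1) * (bb n)⁻¹ ∈ U (n+1) := by
    intro n
    have := hαβ n (F n) (hFP n) (a n) (ha n)
    convert this using 1
    simp only [hbb, hFs, hΦs]
    group
  have hdiff : ∀ j m, bb (m + j) * (bb m)⁻¹ ∈ U m := by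
    intro j
    induction j with
    | zero => intro m; simpa using hU1 m
    | succ j ih =>
      intro m
      have h1 := ih (m+1)
      have h2 := hUU m _ _ h1 (hstep m)
      have e : m + 1 + j = m + (j + 1) := by omega
      rw [e] at h2
      simpa using h2
  have hb0 : bb 0 = 1 := by simp [hbb, hF, hΦ]
  have hbQ : ∀ n, bb n ∈ Q := by
    intro n
    have := hdiff n 0
    rw [hb0] at this
    exact hU0Q (by simpa using this)
  obtain ⟨b, hb, hcl⟩ := hQ.exists_mapClusterPt (f := atTop) (u := bb)
    (le_principal_iff.2 (mem_map.2 (Eventually.of_forall hbQ)))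
  refine ⟨b, hb, ?_⟩
  have hlim : Tendsto (fun n => bb n * b⁻¹) atTop (𝓝 1) := by
    rw [hu.toHasBasis.tendsto_right_iff]
    intro j _
    have hV : {g | g * b⁻¹ ∈ U (j+1)} ∈ 𝓝 b := by
      have hc : Continuous (fun g : G => g * b⁻¹) := by fun_prop
      have := hc.tendsto b
      simp only [mul_inv_cancel] at this
      exact this (hU (j+1))
    obtain ⟨m, hm1, hm2⟩ := ((hcl.frequently hV).and_eventually (eventually_ge_atTop (j+1))).exists
    filter_upwards [eventually_ge_atTop m] with n hn
    obtain ⟨i, rfl⟩ := Nat.exists_eq_add_of_le hn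
    have h3 := hUU j _ _ (hUanti hm2 (hdiff i m)) hm1
    have h4 : bb (m + i) * b⁻¹ ∈ U j := by simpa using h3
    exact hu.antitone (by omega) h4
  have := hlim.mul_const b
  simpa using this

end

section
open MeasureTheory Set Filter Topology
open scoped ENNReal

theorem min_sel {X : Type*} [MeasurableSpace X] [StandardBorelSpace X]
    (S : X → X → Prop) (hS : Equivalence S) (hfin : ∀ x, {y | S x y}.Finite) (hgen : GenBy S) :
    ∃ (π : X → X) (pos : X → ℕ), Measurable π ∧ (∀ x, S x (π x)) ∧ (∀ x y, S x y → π x = π y) ∧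
      Measurable pos ∧ (∀ x, pos x ≤ {y | S x y}.ncard) ∧
      (∀ x y, S x y → pos x = pos y → x = y) := by
  let := upgradeStandardBorel X
  have hιe := measurableEmbedding_embeddingReal X
  set ι : X → ℝ := embeddingReal X with hι
  have ex : ∀ x : X, ∃ z, S x z ∧ ∀ y, S x y → ι z ≤ ι y := by
    intro x
    exact Set.exists_min_image _ ι (hfin x) ⟨x, hS.refl x⟩
  choose π hπS hπ using ex
  have hcm := measurable_count S hgen {p | ι p.2 < ι p.1}
    (measurableSet_lt (hιe.measurable.comp measurable_snd) (hιe.measurable.comp measurable_fst))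
  have hf2 : ∀ x, {y | S x y ∧ ι y < ι x}.Finite := fun x => (hfin x).subset fun y hy => hy.1
  obtain ⟨γ, hγ, h⟩ := hgen
  refine ⟨π, fun x => {y | S x y ∧ ι y < ι x}.ncard, ?_, hπS, ?_, ?_, ?_, ?_⟩
  · rw [← hιe.measurable_comp_iff]
    refine measurable_of_Iio fun r => ?_
    have : (ι ∘ π) ⁻¹' Iio r = ⋃ j, {x | ι (γ j x) < r} := by
      ext x
      simp only [mem_preimage, mem_iUnion, mem_Iio, mem_ofPred_eq, Function.comp]
      constructor
      · intro hx
        obtain ⟨j, hj⟩ := (h _ _).1 (hπS x)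
        exact ⟨j, by rw [hj]; exact hx⟩
      · rintro ⟨j, hj⟩
        exact (hπ x _ ((h _ _).2 ⟨j, rfl⟩)).trans_lt hj
    rw [this]
    exact MeasurableSet.iUnion fun j => (hιe.measurable.comp (hγ j)) measurableSet_Iio
  · intro x y hxy
    apply hιe.injective
    apply le_antisymm
    · exact hπ x _ (hS.trans hxy (hπS y))
    · exact hπ y _ (hS.trans (hS.symm hxy) (hπS x))
  · refine measurable_to_countable' fun k => ?_
    have : (fun x => {y | S x y ∧ ι y < ι x}.ncard) ⁻¹' {k} =
        (fun x => (({y | S x y ∧ (x, y) ∈ {p : X × X | ι p.2 < ι p.1}}.encard : ℕ∞) : ℝ≥0∞)) ⁻¹'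
          {(k : ℝ≥0∞)} := by
      ext x
      have h1 : ({y | S x y ∧ (x, y) ∈ {p : X × X | ι p.2 < ι p.1}}) =
        {y | S x y ∧ ι y < ι x} := rfl
      simp only [mem_preimage, mem_singleton_iff, h1]
      rw [← (hf2 x).cast_ncard_eq]
      norm_num
    rw [this]
    exact hcm (measurableSet_singleton _)
  · intro x
    exact ncard_le_ncard (fun y hy => hy.1) (hfin x)
  · have key : ∀ x y, S x y → ι x < ι y →
        {z | S x z ∧ ι z < ι x}.ncard < {z | S y z ∧ ι z < ι y}.ncard := by
      intro x y hxy hlt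
      refine ncard_lt_ncard ?_ (hf2 y)
      refine ⟨fun z hz => ⟨hS.trans (hS.symm hxy) hz.1, hz.2.trans hlt⟩, fun hsub => ?_⟩
      exact lt_irrefl _ (hsub (show x ∈ {z | S y z ∧ ι z < ι y} from ⟨hS.symm hxy, hlt⟩)).2
    intro x y hxy heq
    rcases lt_trichotomy (ι x) (ι y) with hlt | he | hlt
    · exact absurd heq (key x y hxy hlt).ne
    · exact hιe.injective he
    · exact absurd heq.symm (key y x (hS.symm hxy) hlt).ne

open Classical in
noncomputable def tOf {X : Type*} (S : X → X → Prop) (h : X → ℕ) (x : X) : ℕ :=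
  if hf : (h '' {y | S x y}).Finite then Encodable.encode hf.toFinset else 0

noncomputable def hist {X : Type*} (T : ℕ → X → X → Prop) (r q : ℕ → X → ℕ) : ℕ → X → ℕ
  | 0 => fun _ => 0
  | n+1 => fun x => Nat.pair (hist T r q n x) (Nat.pair (tOf (T n) (hist T r q n) x)
      (Nat.pair (r n x) (q n x)))

theorem tOf_inv {X : Type*} {S : X → X → Prop} (hS : Equivalence S) (h : X → ℕ) {x y : X}
    (hxy : S x y) : tOf S h x = tOf S h y := by
  have : {z | S x z} = {z | S y z} := by
    ext z
    exact ⟨fun h => hS.trans (hS.symm hxy) h, fun h => hS.trans hxy h⟩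
  unfold tOf
  rw [this]

theorem tOf_mem {X : Type*} {S : X → X → Prop} (hS : Equivalence S)
    (hfin : ∀ x, {y | S x y}.Finite) (h : X → ℕ) {x z : X}
    (hxz : tOf S h x = tOf S h z) : ∃ y, S y z ∧ h y = h x := by
  unfold tOf at hxz
  rw [dif_pos ((hfin x).image h), dif_pos ((hfin z).image h)] at hxz
  have h1 := Encodable.encode_injective hxz
  have h2 : h x ∈ ((hfin x).image h).toFinset := by
    rw [Set.Finite.mem_toFinset]
    exact ⟨x, hS.refl x, rfl⟩
  rw [h1, Set.Finite.mem_toFinset] at h2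
  obtain ⟨y, hy, hyx⟩ := h2
  exact ⟨y, hS.symm hy, hyx⟩

theorem tOf_meas {X : Type*} [MeasurableSpace X] {S : X → X → Prop}
    (hfin : ∀ x, {y | S x y}.Finite) (hgen : GenBy S) (h : X → ℕ) (hh : Measurable h) :
    Measurable (tOf S h) := by
  classical
  obtain ⟨γ, hγ, hγS⟩ := hgen
  refine measurable_to_countable' fun k => ?_
  have : tOf S h ⁻¹' {k} = ⋃ F : Finset ℕ, ⋃ (_ : Encodable.encode F = k),
      ⋂ a : ℕ, {x | a ∈ F ↔ ∃ j, h (γ j x) = a} := by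
    ext x
    simp only [mem_preimage, mem_iUnion, mem_iInter, mem_singleton_iff, mem_ofPred_eq]
    have hm : ∀ a, a ∈ ((hfin x).image h).toFinset ↔ ∃ j, h (γ j x) = a := by
      intro a
      rw [Set.Finite.mem_toFinset]
      constructor
      · rintro ⟨y, hy, rfl⟩
        obtain ⟨j, rfl⟩ := (hγS _ _).1 hy
        exact ⟨j, rfl⟩
      · rintro ⟨j, rfl⟩
        exact ⟨_, (hγS _ _).2 ⟨j, rfl⟩, rfl⟩
    unfold tOf
    rw [dif_pos ((hfin x).image h)]
    constructor
    · intro hk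
      exact ⟨_, hk, hm⟩
    · rintro ⟨F, rfl, hF⟩
      congr 1
      ext a
      rw [hm, hF]
  rw [this]
  refine MeasurableSet.iUnion fun F => MeasurableSet.iUnion fun _ => MeasurableSet.iInter fun a => ?_
  have h1 : MeasurableSet {x | ∃ j, h (γ j x) = a} := by
    have : {x | ∃ j, h (γ j x) = a} = ⋃ j, (fun x => h (γ j x)) ⁻¹' {a} := by
      ext x; simp
    rw [this]
    exact MeasurableSet.iUnion fun j => (hh.comp (hγ j)) (measurableSet_singleton a)
  exact (MeasurableSet.const _).iff h1

theorem tOf_range {X : Type*} {S : X → X → Prop}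
    (hfin : ∀ x, {y | S x y}.Finite) (h : X → ℕ) (hh : (range h).Finite) :
    (range (tOf S h)).Finite := by
  refine (hh.toFinset.powerset.finite_toSet.image Encodable.encode).subset ?_
  rintro _ ⟨x, rfl⟩
  unfold tOf
  rw [dif_pos ((hfin x).image h)]
  refine ⟨_, ?_, rfl⟩
  simp only [Finset.coe_powerset, Finite.coe_toFinset, mem_preimage, mem_powerset_iff]
  exact image_subset_range _ _

theorem pair_range {X : Type*} {f g : X → ℕ} (hf : (range f).Finite) (hg : (range g).Finite) :
    (range fun x => Nat.pair (f x) (g x)).Finite := by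
  refine (hf.image2 Nat.pair hg).subset ?_
  rintro _ ⟨x, rfl⟩
  exact ⟨_, ⟨x, rfl⟩, _, ⟨x, rfl⟩, rfl⟩

theorem pair_meas {X : Type*} [MeasurableSpace X] {f g : X → ℕ} (hf : Measurable f)
    (hg : Measurable g) : Measurable fun x => Nat.pair (f x) (g x) :=
  (measurable_of_countable (fun p : ℕ × ℕ => Nat.pair p.1 p.2)).comp (hf.prodMk hg)

theorem coding {X : Type*} [MeasurableSpace X]
    (T : ℕ → X → X → Prop) (zero : ∀ x y, T 0 x y ↔ x = y)
    (eqv : ∀ n, Equivalence (T n)) (inc : ∀ n x y, T n x y → T (n+1) x y)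
    (gen : ∀ n, GenBy (T n)) (hfin : ∀ n x, {y | T n x y}.Finite)
    (r bit lab : ℕ → X → ℕ) (hrm : ∀ n, Measurable (r n)) (hbm : ∀ n, Measurable (bit n))
    (hlm : ∀ n, Measurable (lab n)) (hrf : ∀ n, (range (r n)).Finite)
    (hbf : ∀ n, (range (bit n)).Finite) (hlf : ∀ n, (range (lab n)).Finite)
    (hri : ∀ n x y, T n x y → r n x = r n y) (hli : ∀ n x y, T n x y → lab n x = lab n y)
    (hrs : ∀ n x y, T (n+1) x y → r n x = r n y → T n x y)
    (hbs : ∀ x y, (∀ n, bit n x = bit n y) → x = y) :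
    ∃ t e : ℕ → X → ℕ, (∀ n, Measurable (t n)) ∧ (∀ n, Measurable (e n)) ∧
      (∀ n, (range (t n)).Finite) ∧ (∀ n, (range (e n)).Finite) ∧
      (∀ n x y, T n x y → t n x = t n y) ∧
      (∀ n x y, e n x = e n y → t n x = t n y ∧ t (n+1) x = t (n+1) y ∧ lab n x = lab n y) ∧
      (∀ n x y, T n x y → ∀ k ≥ n, e k x = e k y) ∧
      (∀ n x z, t n x = t n z → ∃ y, T n y z ∧ ∀ k < n, e k y = e k x) ∧
      (∀ n x y, T n x y → (∀ k < n, e k x = e k y) → x = y) ∧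
      (∀ x y, (∀ k, e k x = e k y) → x = y) ∧
      (∀ n x y, (∀ k ≥ n, e k x = e k y) → T n x y) := by
  set q : ℕ → X → ℕ := fun n x => Nat.pair (bit n x) (lab n x) with hq
  set H := hist T r q with hH
  set t : ℕ → X → ℕ := fun n => tOf (T n) (H n) with ht
  set e : ℕ → X → ℕ := fun n x => Nat.pair (t (n+1) x) (r n x) with he
  have Hs : ∀ n x, H (n+1) x = Nat.pair (H n x) (Nat.pair (t n x)
      (Nat.pair (r n x) (Nat.pair (bit n x) (lab n x)))) := fun n x => rfl
  have Hm : ∀ n, Measurable (H n) := by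
    intro n
    induction n with
    | zero => exact measurable_const
    | succ n ih => exact pair_meas ih (pair_meas (tOf_meas (hfin n) (gen n) _ ih)
        (pair_meas (hrm n) (pair_meas (hbm n) (hlm n))))
  have tm : ∀ n, Measurable (t n) := fun n => tOf_meas (hfin n) (gen n) _ (Hm n)
  have Hf : ∀ n, (range (H n)).Finite := by
    intro n
    induction n with
    | zero =>
      refine (finite_singleton 0).subset ?_
      rintro _ ⟨x, rfl⟩
      rfl
    | succ n ih => exact pair_range ih (pair_range (tOf_range (hfin n) _ ih)
        (pair_range (hrf n) (pair_range (hbf n) (hlf n))))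
  have tf : ∀ n, (range (t n)).Finite := fun n => tOf_range (hfin n) _ (Hf n)
  have tinv : ∀ n x y, T n x y → t n x = t n y := fun n x y h => tOf_inv (eqv n) _ h
  have tmem : ∀ n x z, t n x = t n z → ∃ y, T n y z ∧ H n y = H n x := fun n x z h =>
    tOf_mem (eqv n) (hfin n) _ h
  have Hsplit : ∀ n x y, H (n+1) x = H (n+1) y → H n x = H n y ∧ t n x = t n y ∧ r n x = r n y ∧
      bit n x = bit n y ∧ lab n x = lab n y := by
    intro n x y h
    simpa only [Hs, Nat.pair_eq_pair] using h
  have He : ∀ n x y, H n x = H n y → t n x = t n y → ∀ k < n, e k x = e k y := by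
    intro n
    induction n with
    | zero => intro x y _ _ k hk; omega
    | succ n ih =>
      intro x y hxy htxy k hk
      obtain ⟨h1, h2, h3, -⟩ := Hsplit n x y hxy
      rcases Nat.lt_succ_iff_lt_or_eq.1 hk with hk | rfl
      · exact ih x y h1 h2 k hk
      · simp only [he, htxy, h3]
  have esplit : ∀ n x y, e n x = e n y → t (n+1) x = t (n+1) y ∧ r n x = r n y := by
    intro n x y h
    simpa only [he, Nat.pair_eq_pair] using h
  have pB : ∀ n x y, e n x = e n y →
      t n x = t n y ∧ t (n+1) x = t (n+1) y ∧ lab n x = lab n y := by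
    intro n x y h
    obtain ⟨h1, h2⟩ := esplit n x y h
    obtain ⟨y', hy', hH'⟩ := tmem (n+1) x y h1
    obtain ⟨a1, a2, a3, a4, a5⟩ := Hsplit n _ _ hH'
    have hT : T n y' y := hrs n y' y hy' (a3.trans h2)
    exact ⟨a2.symm.trans (tinv n _ _ hT), h1, a5.symm.trans (hli n _ _ hT)⟩
  have pC : ∀ n x y, T n x y → ∀ k ≥ n, e k x = e k y := by
    intro n x y h k hk
    have hk' := mono_rel inc hk h
    simp only [he, tinv (k+1) x y (inc _ _ _ hk'), hri k x y hk']
  have pD : ∀ n x z, t n x = t n z → ∃ y, T n y z ∧ H n y = H n x ∧ ∀ k < n, e k y = e k x := by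
    intro n x z h
    obtain ⟨y, hy, hyH⟩ := tmem n x z h
    exact ⟨y, hy, hyH, He n y x hyH ((tinv n _ _ hy).trans h.symm)⟩
  have pE : ∀ n x y, T n x y → (∀ k < n, e k x = e k y) → x = y := by
    intro n
    induction n with
    | zero => intro x y h _; exact (zero x y).1 h
    | succ n ih =>
      intro x y h hk
      exact ih x y (hrs n x y h (esplit n x y (hk n (by omega))).2) (fun k hk' => hk k (by omega))
  have pI : ∀ x y, (∀ k, e k x = e k y) → x = y := by
    intro x y h
    refine hbs x y fun n => ?_
    obtain ⟨y', h1, h2, h3⟩ := pD (n+1) x y (esplit n x y (h n)).1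
    have : y' = y := pE (n+1) y' y h1 (fun k hk => (h3 k hk).trans (h k))
    subst this
    exact (Hsplit n _ _ h2).2.2.2.1.symm
  refine ⟨t, e, tm, fun n => pair_meas (tm (n+1)) (hrm n), tf,
    fun n => pair_range (tf (n+1)) (hrf n), tinv, pB, pC, ?_, pE, pI, ?_⟩
  · intro n x z h
    obtain ⟨y, h1, -, h2⟩ := pD n x z h
    exact ⟨y, h1, h2⟩
  · intro n x y h
    obtain ⟨y', h1, -, h2⟩ := pD n x y (pB n x y (h n le_rfl)).1
    have : x = y' := by
      refine pI x y' fun k => ?_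
      rcases lt_or_ge k n with hk | hk
      · exact (h2 k hk).symm
      · exact (h k hk).trans (pC n _ _ h1 k hk).symm
    rw [this]
    exact h1

end

section
open MeasureTheory Set Filter Topology
open scoped ENNReal

theorem core {X : Type*} [MeasurableSpace X] [StandardBorelSpace X]
    {G : Type*} [Group G] [TopologicalSpace G] [IsTopologicalGroup G]
    [T2Space G] [LocallyCompactSpace G] [SecondCountableTopology G] [MeasurableSpace G]
    [BorelSpace G] (T : ℕ → X → X → Prop) (C : X → X → G) (K : ℕ → Set G)
    (M : ℕ → ℕ) (h : CoreHyp T C K M) :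
    ∃ (Q : Set G) (t e : ℕ → X → ℕ) (φ : ℕ → X → G) (b : X → G), 
      (∀ n, Measurable (t n)) ∧ (∀ n, Measurable (e n)) ∧
      (∀ n, (range (t n)).Finite) ∧ (∀ n, (range (e n)).Finite) ∧
      (∀ n x y, T n x y → t n x = t n y) ∧
      (∀ n x y, e n x = e n y → t n x = t n y ∧ t (n+1) x = t (n+1) y ∧ φ n x = φ n y) ∧
      (∀ n x y, T n x y → ∀ k ≥ n, e k x = e k y) ∧
      (∀ n x z, t n x = t n z → ∃ y, T n y z ∧ ∀ k < n, e k y = e k x) ∧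
      (∀ n x y, T n x y → (∀ k < n, e k x = e k y) → x = y) ∧
      (∀ x y, (∀ k, e k x = e k y) → x = y) ∧
      (∀ n x y, (∀ k ≥ n, e k x = e k y) → T n x y) ∧
      IsCompact Q ∧ Measurable b ∧ (∀ x, b x ∈ Q) ∧
      (∀ n x y, T n x y → C x y = (b x)⁻¹ * (((List.range n).map fun k => φ k x).prod *
        (((List.range n).map fun k => φ k y).prod)⁻¹) * b y) := by
  have hfin : ∀ n x, {y | T n x y}.Finite := fun n x =>
    finite_of_encard_le_coe (h.card n x)
  have := fun n => min_sel (T n) (h.eqv n) (hfin n) (h.gen n)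
  choose π pos hπm hπT hπi hpm hpb hps using this
  have hπ0 : ∀ x, π 0 x = x := fun x => ((h.zero _ _).1 (hπT 0 x)).symm
  have hππ : ∀ n x, T (n+1) (π n x) (π (n+1) x) := fun n x =>
    (h.eqv _).trans ((h.eqv _).symm (h.inc _ _ _ (hπT n x))) (hπT (n+1) x)
  obtain ⟨Q, α, β, N, hQ, hα, hN, hseq⟩ := group_seq (fun n => K (n+1)) (fun n => h.comp _)
  set a : ℕ → X → G := fun n x => C (π n x) (π (n+1) x) with ha
  have ham : ∀ n, Measurable (a n) := fun n => h.meas (n+1) _ _ (hπm n) (hπm _) (hππ n)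
  have haK : ∀ x n, a n x ∈ K (n+1) := fun x n => h.mem _ _ _ (hππ n x)
  set lab : ℕ → X → ℕ := fun n x => α n (a n x) with hlab
  have hlabm : ∀ n, Measurable (lab n) := fun n => (hα n).comp (ham n)
  have hlabi : ∀ n x y, T n x y → lab n x = lab n y := by
    intro n x y hxy
    simp only [hlab, ha, hπi n x y hxy, hπi (n+1) x y (h.inc _ _ _ hxy)]
  have hbitm := MeasurableSpace.measurable_mapNatBool X
  have s1 : ∀ n, (range fun x => pos (n+1) (π n x)).Finite := by
    intro n
    refine (finite_Iic (M (n+1))).subset ?_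
    rintro _ ⟨x, rfl⟩
    refine (hpb _ _).trans ?_
    have := h.card (n+1) (π n x)
    rw [← (hfin _ _).cast_ncard_eq] at this
    exact_mod_cast this
  have s2 : ∀ n, (range fun x => (MeasurableSpace.mapNatBool X x n).toNat).Finite := by
    intro n
    refine (finite_Iic 1).subset ?_
    rintro _ ⟨x, rfl⟩
    exact Bool.toNat_le _
  have s3 : ∀ n, (range (lab n)).Finite := by
    intro n
    refine (finite_Iio (N n)).subset ?_
    rintro _ ⟨x, rfl⟩
    exact hN _ _
  have s4 : ∀ n x y, T n x y → pos (n+1) (π n x) = pos (n+1) (π n y) := by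
    intro n x y hxy
    simp only [hπi n x y hxy]
  have s5 : ∀ n x y, T (n+1) x y → pos (n+1) (π n x) = pos (n+1) (π n y) → T n x y := by
    intro n x y hxy hr
    have h1 : π n x = π n y := by
      refine hps (n+1) _ _ ?_ hr
      exact (h.eqv _).trans ((h.eqv _).symm (h.inc _ _ _ (hπT n x)))
        ((h.eqv _).trans hxy (h.inc _ _ _ (hπT n y)))
    have h2 := hπT n x
    rw [h1] at h2
    exact (h.eqv _).trans h2 ((h.eqv _).symm (hπT n y))
  have s6 : ∀ x y, (∀ n, (MeasurableSpace.mapNatBool X x n).toNat =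
      (MeasurableSpace.mapNatBool X y n).toNat) → x = y := by
    intro x y hxy
    apply MeasurableSpace.injective_mapNatBool X
    funext n
    have := hxy n
    revert this
    cases MeasurableSpace.mapNatBool X x n <;> cases MeasurableSpace.mapNatBool X y n <;> simp
  obtain ⟨t, e, tm, em, tf, ef, pA, pB, pC, pD, pE, pI, pF⟩ := coding T h.zero h.eqv h.inc h.gen hfin
    (fun n x => pos (n+1) (π n x)) (fun n x => (MeasurableSpace.mapNatBool X x n).toNat) lab
    (fun n => (hpm _).comp (hπm n))
    (fun n => (measurable_of_countable Bool.toNat).comp ((measurable_pi_apply n).comp hbitm))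
    hlabm s1 s2 s3 s4 hlabi s5 s6
  choose b hbQ hb using fun x => hseq (fun n => a n x) (haK x)
  set φ : ℕ → X → G := fun n x => β n (lab n x) with hφ
  have hφm : ∀ n, Measurable (φ n) := fun n => (measurable_of_countable (β n)).comp (hlabm n)
  have prod_meas : ∀ (ψ : ℕ → X → G), (∀ n, Measurable (ψ n)) → ∀ n,
      Measurable fun x => ((List.range n).map fun k => ψ k x).prod := by
    intro ψ hψ n
    induction n with
    | zero => simp
    | succ n ih =>
      simp only [List.range_succ, List.map_append, List.prod_append, List.map_cons, List.map_nil,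
        List.prod_cons, List.prod_nil, mul_one]
      exact ih.mul (hψ n)
  have hbm : Measurable b := by
    refine measurable_of_tendsto_metrizable
      (f := fun n x => ((List.range n).map fun k => φ k x).prod *
        (((List.range n).map fun k => a k x).prod)⁻¹) ?_ ?_
    · intro n
      exact (prod_meas φ hφm n).mul (prod_meas a ham n).inv
    · rw [tendsto_pi_nhds]
      exact fun x => hb x
  refine ⟨Q, t, e, φ, b, tm, em, tf, ef, pA, ?_, pC, pD, pE, pI, pF, hQ, hbm, hbQ, ?_⟩
  · intro n x y hxy
    obtain ⟨h1, h2, h3⟩ := pB n x y hxy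
    exact ⟨h1, h2, by simp only [hφ, h3]⟩
  have hΦ : ∀ n x, ((List.range n).map fun k => a k x).prod = C x (π n x) := by
    intro n x
    induction n with
    | zero =>
      have := h.coc 0 x x x ((h.eqv 0).refl x) ((h.eqv 0).refl x)
      rw [hπ0]
      have h1 : C x x = 1 := by simpa using this
      simp [h1]
    | succ n ih =>
      rw [List.range_succ, List.map_append, List.prod_append, ih]
      simp only [List.map_cons, List.map_nil, List.prod_cons, List.prod_nil, mul_one, ha]
      exact h.coc (n+1) _ _ _ (h.inc _ _ _ (hπT n x)) (hππ n x)
  intro n x y hxy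
  have hF : ∀ j, ((List.range (n+j)).map fun k => φ k x).prod *
        (((List.range (n+j)).map fun k => φ k y).prod)⁻¹ = ((List.range n).map fun k => φ k x).prod *
        (((List.range n).map fun k => φ k y).prod)⁻¹ := by
    intro j
    induction j with
    | zero => rfl
    | succ j ih =>
      have h1 : φ (n+j) x = φ (n+j) y := by
        simp only [hφ, hlabi (n+j) x y (mono_rel h.inc (Nat.le_add_right n j) hxy)]
      rw [← add_assoc, List.range_succ, List.map_append, List.prod_append, List.map_append,
        List.prod_append]
      simp only [List.map_cons, List.map_nil, List.prod_cons, List.prod_nil, mul_one, h1]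
      rw [← ih]
      group
  have hlim : Tendsto (fun m => (((List.range m).map fun k => φ k x).prod *
        (((List.range m).map fun k => a k x).prod)⁻¹) * C x y *
        (((List.range m).map fun k => φ k y).prod *
        (((List.range m).map fun k => a k y).prod)⁻¹)⁻¹) atTop (𝓝 (b x * C x y * (b y)⁻¹)) :=
    ((hb x).mul_const _).mul (hb y).inv
  have hlim2 : Tendsto (fun m => (((List.range m).map fun k => φ k x).prod *
        (((List.range m).map fun k => a k x).prod)⁻¹) * C x y *
        (((List.range m).map fun k => φ k y).prod *
        (((List.range m).map fun k => a k y).prod)⁻¹)⁻¹) atTop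
      (𝓝 (((List.range n).map fun k => φ k x).prod *
        (((List.range n).map fun k => φ k y).prod)⁻¹)) := by
    refine tendsto_const_nhds.congr' ?_
    filter_upwards [eventually_ge_atTop n] with m hm
    obtain ⟨j, rfl⟩ := Nat.exists_eq_add_of_le hm
    rw [← hF j, hΦ, hΦ]
    have hxy' := mono_rel h.inc hm hxy
    have h1 := h.coc (n+j) x y (π (n+j) y) hxy' (hπT _ _)
    rw [hπi (n+j) x y hxy', ← h1]
    group
  have := tendsto_nhds_unique hlim hlim2
  rw [← this]
  group

end

section
open MeasureTheory Set Filter Topology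
open scoped ENNReal

theorem rn_density {X : Type*} [MeasurableSpace X] [StandardBorelSpace X]
    (μ : Measure X) (S : X → X → Prop) (l s : X → ℝ) (hl : Measurable l) (hs : Measurable s)
    (h : RNProp μ S l) (κ : ℝ≥0∞) :
    RNProp (κ • μ.withDensity fun x => ENNReal.ofReal (Real.exp (s x))) S (fun x => l x + s x) := by
  intro g B hg hB hi hS
  have hgB := hB.image_of_measurable_injOn hg hi
  have hw : Measurable fun x => ENNReal.ofReal (Real.exp (s x)) := hs.exp.ennreal_ofReal
  have hk : Measurable fun y => ENNReal.ofReal (Real.exp (l (g y) - l y)) :=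
    ((hl.comp hg).sub hl).exp.ennreal_ofReal
  have hmap : μ.restrict (g '' B) = ((μ.restrict B).withDensity
      fun y => ENNReal.ofReal (Real.exp (l (g y) - l y))).map g := by
    ext C hC
    rw [Measure.restrict_apply hC, Measure.map_apply hg hC, withDensity_apply _ (hg hC),
      Measure.restrict_restrict (hg hC),
      ← h g (g ⁻¹' C ∩ B) hg ((hg hC).inter hB) (hi.mono inter_subset_right)
        (fun x hx => hS x hx.2), inter_comm (g ⁻¹' C), image_inter_preimage, inter_comm]
  rw [Measure.smul_apply, Measure.restrict_smul, lintegral_smul_measure]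
  congr 1
  have hwg : Measurable fun y => ENNReal.ofReal (Real.exp (s (g y))) := hw.comp hg
  have hls : Measurable fun y => ENNReal.ofReal (Real.exp ((l (g y) + s (g y)) - (l y + s y))) :=
    (((hl.comp hg).add (hs.comp hg)).sub (hl.add hs)).exp.ennreal_ofReal
  rw [withDensity_apply _ hgB, hmap, lintegral_map hw hg,
    lintegral_withDensity_eq_lintegral_mul _ hk hwg, restrict_withDensity hB,
    lintegral_withDensity_eq_lintegral_mul _ hw hls]
  refine lintegral_congr fun y => ?_
  simp only [Pi.mul_apply]
  rw [← ENNReal.ofReal_mul (Real.exp_pos _).le, ← ENNReal.ofReal_mul (Real.exp_pos _).le,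
    ← Real.exp_add, ← Real.exp_add]
  congr 2
  ring

theorem RNProp.congr {X : Type*} [MeasurableSpace X] {μ : Measure X} {S : X → X → Prop}
    {l l' : X → ℝ} (h : RNProp μ S l) (hll : ∀ x y, S x y → l y - l x = l' y - l' x) :
    RNProp μ S l' := by
  intro g B hg hB hi hS
  rw [h g B hg hB hi hS]
  refine setLIntegral_congr_fun hB fun y hy => ?_
  rw [hll _ _ (hS y hy)]

theorem markov {X : Type*} [MeasurableSpace X] [StandardBorelSpace X]
    (ν : Measure X) (T : X → X → Prop) (heq : Equivalence T) (hgen : GenBy T)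
    (n : ℕ) (t : X → ℕ) (e : ℕ → X → ℕ) (Ψ : X → ℝ) (ht : Measurable t)
    (he : ∀ k, Measurable (e k)) (hrn : RNProp ν T Ψ)
    (hΨ : ∀ x y, (∀ k < n, e k x = e k y) → Ψ x = Ψ y)
    (pA : ∀ x y, T x y → t x = t y)
    (pD : ∀ x z, t x = t z → ∃ y, T y z ∧ ∀ k < n, e k y = e k x)
    (pE : ∀ x y, T x y → (∀ k < n, e k x = e k y) → x = y)
    (x : X) (C : Set X) (hC : MeasurableSet C) (hCi : ∀ y z, T y z → y ∈ C → z ∈ C) :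
    ν ({y | t y = t x ∧ ∀ k < n, e k y = e k x} ∩ C) * ν {y | t y = t x} =
      ν {y | t y = t x ∧ ∀ k < n, e k y = e k x} * ν ({y | t y = t x} ∩ C) := by
  classical
  set D : Set X := {y | t y = t x} with hD
  have hDm : MeasurableSet D := ht (measurableSet_singleton (t x))
  set Z : X → Set X := fun x' => {y | t y = t x ∧ ∀ k < n, e k y = e k x'} with hZ
  have hZm : ∀ x', MeasurableSet (Z x') := by
    intro x'
    have : Z x' = D ∩ ⋂ k, ⋂ (_ : k < n), (e k) ⁻¹' {e k x'} := by
      ext y; simp [hZ, hD]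
    rw [this]
    exact hDm.inter (MeasurableSet.iInter fun k => MeasurableSet.iInter fun _ =>
      he k (measurableSet_singleton _))
  have swap : ∀ x', t x' = t x → ∀ C : Set X, MeasurableSet C → (∀ y z, T y z → y ∈ C → z ∈ C) →
      ν (Z x' ∩ C) = ENNReal.ofReal (Real.exp (Ψ x' - Ψ x)) * ν (Z x ∩ C) := by
    intro x' hx' C hC hCi
    obtain ⟨γ, hγ, hγT⟩ := hgen
    have hp : ∀ y, ∃ j, γ j y ∈ Z x' ∨ y ∉ D := by
      intro y
      by_cases hy : y ∈ D
      · obtain ⟨z, hz, hze⟩ := pD x' y (hx'.trans (show t y = t x from hy).symm)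
        obtain ⟨j, rfl⟩ := (hγT _ _).1 (heq.symm hz)
        exact ⟨j, Or.inl ⟨(pA _ _ hz).trans hy, hze⟩⟩
      · exact ⟨0, Or.inr hy⟩
    have hfm : Measurable fun y => Nat.find (hp y) :=
      measurable_find hp fun k => ((hγ k) (hZm x')).union hDm.compl
    let g : X → X := fun y => γ (Nat.find (hp y)) y
    have hg : Measurable g := by
      have h1 : Measurable (fun p : ℕ × X => γ p.1 p.2) :=
        measurable_from_prod_countable_right hγ
      exact h1.comp (hfm.prodMk measurable_id)
    have hgT : ∀ y, T y (g y) := fun y => (hγT _ _).2 ⟨_, rfl⟩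
    have hgZ : ∀ y ∈ D, g y ∈ Z x' := by
      intro y hy
      rcases Nat.find_spec (hp y) with h | h
      · exact h
      · exact absurd hy h
    have hinj : InjOn g (Z x ∩ C) := by
      intro a ha b hb hab
      have h1 : T a b := heq.trans (hgT a) (hab ▸ heq.symm (hgT b))
      exact pE a b h1 fun k hk => (ha.1.2 k hk).trans (hb.1.2 k hk).symm
    have himg : g '' (Z x ∩ C) = Z x' ∩ C := by
      ext z
      constructor
      · rintro ⟨y, hy, rfl⟩
        exact ⟨hgZ y hy.1.1, hCi _ _ (hgT y) hy.2⟩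
      · rintro ⟨hz, hzC⟩
        obtain ⟨y, hy, hye⟩ := pD x z (show t z = t x from hz.1).symm
        have hyD : y ∈ D := (pA _ _ hy).trans hz.1
        refine ⟨y, ⟨⟨hyD, hye⟩, hCi _ _ (heq.symm hy) hzC⟩, ?_⟩
        refine pE _ _ (heq.trans (heq.symm (hgT y)) hy) fun k hk => ?_
        exact ((hgZ y hyD).2 k hk).trans (hz.2 k hk).symm
    rw [← himg, hrn g _ hg ((hZm x).inter hC) hinj (fun y _ => hgT y), ← setLIntegral_const]
    refine setLIntegral_congr_fun ((hZm x).inter hC) fun y hy => ?_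
    rw [hΨ y x hy.1.2, hΨ (g y) x' (hgZ y hy.1.1).2]
  let word : X → (Fin n → ℕ) := fun y k => e k y
  have hwm : Measurable word := measurable_pi_lambda _ fun k => he k
  let κ : (Fin n → ℕ) → ℝ≥0∞ := fun w =>
    if h : ∃ x', t x' = t x ∧ word x' = w then ENNReal.ofReal (Real.exp (Ψ h.choose - Ψ x)) else 0
  have hκ : ∀ C : Set X, MeasurableSet C → (∀ y z, T y z → y ∈ C → z ∈ C) →
      ∀ w, ν (D ∩ C ∩ word ⁻¹' {w}) = κ w * ν (Z x ∩ C) := by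
    intro C hC hCi w
    by_cases h : ∃ x', t x' = t x ∧ word x' = w
    · simp only [κ, dif_pos h]
      rw [← swap _ h.choose_spec.1 C hC hCi]
      congr 1
      have hw := h.choose_spec.2
      ext y
      constructor
      · rintro ⟨⟨h1, h2⟩, h3⟩
        refine ⟨⟨h1, fun k hk => ?_⟩, h2⟩
        have h4 : word y = word h.choose := by rw [hw]; exact h3
        exact congrFun h4 ⟨k, hk⟩
      · rintro ⟨⟨h1, h2⟩, h3⟩
        refine ⟨⟨h1, h3⟩, ?_⟩
        change word y = w
        rw [← hw]
        funext k
        exact h2 k k.2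
    · simp only [κ, dif_neg h, zero_mul]
      have : D ∩ C ∩ word ⁻¹' {w} = ∅ := by
        ext y
        constructor
        · rintro ⟨⟨h1, h2⟩, h3⟩
          exact h ⟨y, h1, h3⟩
        · exact fun h => h.elim
      rw [this, measure_empty]
  have hsum : ∀ C : Set X, MeasurableSet C → (∀ y z, T y z → y ∈ C → z ∈ C) →
      ν (D ∩ C) = (∑' w, κ w) * ν (Z x ∩ C) := by
    intro C hC hCi
    rw [← ENNReal.tsum_mul_right]
    simp_rw [← hκ C hC hCi]
    rw [← measure_iUnion]
    · congr 1
      ext y; simp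
    · intro w w' hww
      rw [Function.onFun, Set.disjoint_left]
      rintro y ⟨-, h1⟩ ⟨-, h2⟩
      exact hww (h1.symm.trans h2)
    · exact fun w => (hDm.inter hC).inter (hwm (measurableSet_singleton w))
  have hu := hsum univ MeasurableSet.univ (fun _ _ _ _ => trivial)
  rw [inter_univ, inter_univ] at hu
  change ν (Z x ∩ C) * ν D = ν (Z x) * ν (D ∩ C)
  rw [hsum C hC hCi, hu]
  ring

end

section
open MeasureTheory Set Filter Topology
open scoped ENNReal

theorem ae_fiber_pos {X : Type*} [MeasurableSpace X] (ν : Measure X) (h : X → ℕ) :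
    ∀ᵐ x ∂ν, ν (h ⁻¹' {h x}) ≠ 0 := by
  have h1 : ∀ᵐ x ∂ν, ∀ a : ℕ, ν (h ⁻¹' {a}) = 0 → h x ≠ a := by
    rw [ae_all_iff]
    intro a
    by_cases ha : ν (h ⁻¹' {a}) = 0
    · rw [ae_iff]
      have : {x | ¬ (ν (h ⁻¹' {a}) = 0 → h x ≠ a)} = h ⁻¹' {a} := by
        ext x; simp [ha]
      rw [this, ha]
    · exact ae_of_all _ fun x h => absurd h ha
  filter_upwards [h1] with x hx h0
  exact hx _ h0 rfl

theorem real_eq_finset_sum {X ι : Type*} [MeasurableSpace X] (ν : Measure X) [IsFiniteMeasure ν]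
    (D : Set X) (s : Finset ι) (A : ι → Set X) (hA : ∀ i, MeasurableSet (A i))
    (hd : ∀ i j x, x ∈ A i → x ∈ A j → i = j)
    (hD : ∀ᵐ x ∂ν, x ∈ D ↔ ∃ i ∈ s, x ∈ A i) :
    ν.real D = ∑ i ∈ s, ν.real (A i) := by
  rw [← measureReal_biUnion_finset]
  · apply measureReal_congr
    filter_upwards [hD] with x hx
    apply propext
    change x ∈ D ↔ x ∈ ⋃ i ∈ s, A i
    rw [hx]; simp
  · intro i _ j _ hij
    rw [Function.onFun, Set.disjoint_left]
    exact fun x h1 h2 => hij (hd i j x h1 h2)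
  · exact fun i _ => hA i

structure Asm {X : Type*} [MeasurableSpace X] (ν : Measure X) (T : ℕ → X → X → Prop)
    (t e : ℕ → X → ℕ) : Prop where
  mt : ∀ n, Measurable (t n)
  me : ∀ n, Measurable (e n)
  ft : ∀ n, (range (t n)).Finite
  fe : ∀ n, (range (e n)).Finite
  pA : ∀ n x y, T n x y → t n x = t n y
  pB : ∀ n x y, e n x = e n y → t n x = t n y ∧ t (n + 1) x = t (n + 1) y
  pC : ∀ n x y, T n x y → ∀ k ≥ n, e k x = e k y
  pD : ∀ n x z, t n x = t n z → ∃ y, T n y z ∧ ∀ k < n, e k y = e k x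
  pI : ∀ x y, (∀ k, e k x = e k y) → x = y
  pF : ∀ n x y, (∀ k ≥ n, e k x = e k y) → T n x y
  mkv : ∀ n x (C : Set X), MeasurableSet C → (∀ y z, T n y z → y ∈ C → z ∈ C) →
    ν ({y | t n y = t n x ∧ ∀ k < n, e k y = e k x} ∩ C) * ν {y | t n y = t n x} =
      ν {y | t n y = t n x ∧ ∀ k < n, e k y = e k x} * ν ({y | t n y = t n x} ∩ C)

namespace Asm

variable {X : Type*} [MeasurableSpace X] {ν : Measure X} {T : ℕ → X → X → Prop}
    {t e : ℕ → X → ℕ}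

theorem ne_rep {h : X → ℕ} {a : ℕ} (ha : ν (h ⁻¹' {a}) ≠ 0) : ∃ x, h x = a := by
  obtain ⟨x, hx⟩ := nonempty_of_measure_ne_zero ha
  exact ⟨x, hx⟩

def Pos (ν : Measure X) (e : ℕ → X → ℕ) : Set X := {x | ∀ n, ν (e n ⁻¹' {e n x}) ≠ 0}

theorem pos_ae (ν : Measure X) (e : ℕ → X → ℕ) : ∀ᵐ x ∂ν, x ∈ Pos ν e := by
  have := ae_all_iff.2 fun n => ae_fiber_pos ν (e n)
  filter_upwards [this] with x hx using hx

theorem pos_meas (h : Asm ν T t e) : MeasurableSet (Pos ν e) := by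
  have : Pos ν e = ⋂ n, (e n) ⁻¹' {a | ν (e n ⁻¹' {a}) ≠ 0} := by
    ext x; simp [Pos]
  rw [this]
  exact MeasurableSet.iInter fun n => h.me n (Set.to_countable _).measurableSet

theorem t_pos (h : Asm ν T t e) (n : ℕ) (x : X) (hx : ν (e n ⁻¹' {e n x}) ≠ 0) :
    ν (t n ⁻¹' {t n x}) ≠ 0 := fun h0 =>
  hx (measure_mono_null (fun y hy => (h.pB n y x hy).1) h0)

theorem t_pos' (h : Asm ν T t e) (n : ℕ) (x : X) (hx : ν (e n ⁻¹' {e n x}) ≠ 0) :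
    ν (t (n + 1) ⁻¹' {t (n + 1) x}) ≠ 0 := fun h0 =>
  hx (measure_mono_null (fun y hy => (h.pB n y x hy).2) h0)

noncomputable def rep (ν : Measure X) (e : ℕ → X → ℕ) (n : ℕ)
    (a : {a : ℕ // ν (e n ⁻¹' {a}) ≠ 0}) : X := (ne_rep a.2).choose

theorem rep_spec (n : ℕ) (a : {a : ℕ // ν (e n ⁻¹' {a}) ≠ 0}) : e n (rep ν e n a) = a.1 :=
  (ne_rep a.2).choose_spec

theorem rep_pos (n : ℕ) (a : {a : ℕ // ν (e n ⁻¹' {a}) ≠ 0}) :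
    ν (e n ⁻¹' {e n (rep ν e n a)}) ≠ 0 := by
  have := rep_spec n a
  rw [this]; exact a.2

noncomputable def diag (h : Asm ν T t e) [NeZero ν] : BratteliDiagram where
  V n := {v : ℕ // ν (t n ⁻¹' {v}) ≠ 0}
  E n := {a : ℕ // ν (e n ⁻¹' {a}) ≠ 0}
  src n a := ⟨t n (rep ν e n a), h.t_pos n _ (rep_pos n a)⟩
  rng n a := ⟨t (n + 1) (rep ν e n a), h.t_pos' n _ (rep_pos n a)⟩
  finV n := ((h.ft n).subset (fun _ hv => ne_rep hv)).to_subtype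
  finE n := ((h.fe n).subset (fun _ hv => ne_rep hv)).to_subtype
  nonemptyV n := by
    obtain ⟨x, hx⟩ := (pos_ae ν e).exists
    exact ⟨⟨t n x, h.t_pos n x (hx n)⟩⟩
  emits n v := by
    have hf : ∃ᵐ x ∂ν, t n x = v.1 := by
      rw [frequently_ae_iff]; exact v.2
    obtain ⟨x, hx, hp⟩ := (hf.and_eventually (pos_ae ν e)).exists
    refine ⟨⟨e n x, hp n⟩, Subtype.ext ?_⟩
    rw [← hx]
    exact (h.pB n _ _ (rep_spec n ⟨e n x, hp n⟩)).1

theorem src_eq (h : Asm ν T t e) [NeZero ν] (n : ℕ) (a : h.diag.E n) (x : X) (hx : e n x = a.1) :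
    t n x = (h.diag.src n a).1 := (h.pB n _ _ (hx.trans (rep_spec n a).symm)).1

theorem rng_eq (h : Asm ν T t e) [NeZero ν] (n : ℕ) (a : h.diag.E n) (x : X) (hx : e n x = a.1) :
    t (n + 1) x = (h.diag.rng n a).1 := (h.pB n _ _ (hx.trans (rep_spec n a).symm)).2

def path (h : Asm ν T t e) [NeZero ν] (x : X) (hx : x ∈ Pos ν e) : h.diag.PathSpace :=
  ⟨fun n => ⟨e n x, hx n⟩, fun n => Subtype.ext
    ((h.rng_eq n ⟨e n x, hx n⟩ x rfl).symm.trans (h.src_eq (n + 1) ⟨e (n + 1) x, hx (n + 1)⟩ x rfl))⟩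

noncomputable def pr (h : Asm ν T t e) [NeZero ν] (n : ℕ) (a : h.diag.E n) : ℝ :=
  ν.real (e n ⁻¹' {a.1}) / ν.real (t n ⁻¹' {(h.diag.src n a).1})

noncomputable def ini (h : Asm ν T t e) [NeZero ν] (v : h.diag.V 0) : ℝ :=
  ν.real (t 0 ⁻¹' {v.1})

theorem pr_pos (h : Asm ν T t e) [NeZero ν] [IsFiniteMeasure ν] (n : ℕ) (a : h.diag.E n) :
    0 < h.pr n a := by
  refine div_pos ?_ ?_
  · exact ENNReal.toReal_pos a.2 (measure_ne_top _ _)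
  · exact ENNReal.toReal_pos (h.diag.src n a).2 (measure_ne_top _ _)

theorem ini_pos (h : Asm ν T t e) [NeZero ν] [IsFiniteMeasure ν] (v : h.diag.V 0) :
    0 < h.ini v := ENNReal.toReal_pos v.2 (measure_ne_top _ _)

theorem ini_sum (h : Asm ν T t e) [NeZero ν] [IsProbabilityMeasure ν] :
    ∑ᶠ v : h.diag.V 0, h.ini v = 1 := by
  have := h.diag.finV 0
  have := Fintype.ofFinite (h.diag.V 0)
  rw [finsum_eq_sum_of_fintype, ← probReal_univ (μ := ν)]
  symm
  refine real_eq_finset_sum ν univ _ (fun v : h.diag.V 0 => t 0 ⁻¹' {v.1}) ?_ ?_ ?_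
  · exact fun i => h.mt 0 (measurableSet_singleton _)
  · exact fun i j x h1 h2 => Subtype.ext (Eq.trans (Eq.symm h1) h2)
  · filter_upwards [pos_ae ν e] with x hx
    exact ⟨fun _ => ⟨⟨t 0 x, h.t_pos 0 x (hx 0)⟩, Finset.mem_univ _, rfl⟩, fun _ => trivial⟩

theorem pr_sum (h : Asm ν T t e) [NeZero ν] [IsFiniteMeasure ν] (n : ℕ) (v : h.diag.V n) :
    ∑ᶠ a ∈ {a : h.diag.E n | h.diag.src n a = v}, h.pr n a = 1 := by
  have := h.diag.finE n
  have hs : {a : h.diag.E n | h.diag.src n a = v}.Finite := Set.toFinite _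
  rw [finsum_mem_eq_finite_toFinset_sum _ hs]
  have hv : ν.real (t n ⁻¹' {v.1}) ≠ 0 := (ENNReal.toReal_pos v.2 (measure_ne_top _ _)).ne'
  have h1 : ∑ a ∈ hs.toFinset, h.pr n a =
      (∑ a ∈ hs.toFinset, ν.real (e n ⁻¹' {a.1})) / ν.real (t n ⁻¹' {v.1}) := by
    rw [Finset.sum_div]
    refine Finset.sum_congr rfl fun a ha => ?_
    have : h.diag.src n a = v := by simpa using ha
    rw [pr, this]
  rw [h1, div_eq_one_iff_eq hv]
  symm
  refine real_eq_finset_sum ν _ _ (fun a : h.diag.E n => e n ⁻¹' {a.1}) ?_ ?_ ?_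
  · exact fun i => h.me n (measurableSet_singleton _)
  · exact fun i j x h1 h2 => Subtype.ext (Eq.trans (Eq.symm h1) h2)
  · filter_upwards [pos_ae ν e] with x hx
    constructor
    · intro hxv
      refine ⟨⟨e n x, hx n⟩, ?_, rfl⟩
      refine hs.mem_toFinset.2 ?_
      exact Subtype.ext ((h.src_eq n ⟨e n x, hx n⟩ x rfl).symm.trans hxv)
    · rintro ⟨a, ha, hxa⟩
      rw [Set.Finite.mem_toFinset] at ha
      have ha' : h.diag.src n a = v := ha
      have := h.src_eq n a x hxa
      rw [ha'] at this
      exact this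

theorem wit (h : Asm ν T t e) [NeZero ν] (x : h.diag.PathSpace) (n : ℕ) :
    ∃ y, t n y = (h.diag.src n (x.1 n)).1 ∧ ∀ k < n, e k y = (x.1 k).1 := by
  induction n with
  | zero => exact ⟨_, rfl, fun k hk => absurd hk (Nat.not_lt_zero k)⟩
  | succ n ih =>
    obtain ⟨y, hy, hye⟩ := ih
    obtain ⟨z, hz, hze⟩ := h.pD n y (rep ν e n (x.1 n)) (hy.trans rfl)
    have hn : e n z = (x.1 n).1 := (h.pC n _ _ hz n le_rfl).trans (rep_spec n (x.1 n))
    refine ⟨z, ?_, ?_⟩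
    · rw [h.rng_eq n (x.1 n) z hn, x.2 n]
    · intro k hk
      rcases Nat.lt_succ_iff_lt_or_eq.1 hk with hk | rfl
      · exact (hze k hk).trans (hye k hk)
      · exact hn

theorem cylX (h : Asm ν T t e) [NeZero ν] [IsFiniteMeasure ν] (x : h.diag.PathSpace) (n : ℕ) :
    ν.real {y | t n y = (h.diag.src n (x.1 n)).1 ∧ ∀ k < n, e k y = (x.1 k).1} =
      h.ini (h.diag.src 0 (x.1 0)) * ∏ k ∈ Finset.range n, h.pr k (x.1 k) := by
  induction n with
  | zero =>
    simp only [Finset.range_zero, Finset.prod_empty, mul_one, ini]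
    congr 1
    ext y
    simp
  | succ n ih =>
    obtain ⟨y, hy, hye⟩ := h.wit x n
    have hm := h.mkv n y (e n ⁻¹' {(x.1 n).1}) (h.me n (measurableSet_singleton _))
      (fun a b hab ha => (h.pC n a b hab n le_rfl).symm.trans ha)
    have hZ : {z | t n z = t n y ∧ ∀ k < n, e k z = e k y} =
        {z | t n z = (h.diag.src n (x.1 n)).1 ∧ ∀ k < n, e k z = (x.1 k).1} := by
      ext z
      simp only [mem_ofPred_eq, hy]
      exact and_congr_right fun _ => forall₂_congr fun k hk => by rw [hye k hk]
    have hZ' : {z | t n z = t n y ∧ ∀ k < n, e k z = e k y} ∩ e n ⁻¹' {(x.1 n).1} =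
        {z | t (n + 1) z = (h.diag.src (n + 1) (x.1 (n + 1))).1 ∧
          ∀ k < n + 1, e k z = (x.1 k).1} := by
      rw [hZ]
      ext z
      constructor
      · rintro ⟨⟨h1, h2⟩, h3⟩
        refine ⟨?_, ?_⟩
        · rw [h.rng_eq n (x.1 n) z h3, x.2 n]
        · intro k hk
          rcases Nat.lt_succ_iff_lt_or_eq.1 hk with hk | rfl
          · exact h2 k hk
          · exact h3
      · rintro ⟨h1, h2⟩
        exact ⟨⟨h.src_eq n _ z (h2 n (Nat.lt_succ_self n)),
          fun k hk => h2 k (Nat.lt_succ_of_lt hk)⟩, h2 n (Nat.lt_succ_self n)⟩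
    have hD : {z | t n z = t n y} = t n ⁻¹' {(h.diag.src n (x.1 n)).1} := by
      rw [hy]; rfl
    have hDC : {z | t n z = t n y} ∩ e n ⁻¹' {(x.1 n).1} = e n ⁻¹' {(x.1 n).1} := by
      rw [hD]
      exact inter_eq_right.2 fun z hz => h.src_eq n _ z hz
    rw [hZ', hDC, hD, hZ] at hm
    have hm' := congrArg ENNReal.toReal hm
    rw [ENNReal.toReal_mul, ENNReal.toReal_mul] at hm'
    have hv : ν.real (t n ⁻¹' {(h.diag.src n (x.1 n)).1}) ≠ 0 :=
      (ENNReal.toReal_pos (h.diag.src n (x.1 n)).2 (measure_ne_top _ _)).ne'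
    rw [Finset.prod_range_succ, ← mul_assoc, ← ih, pr, mul_div_assoc', eq_div_iff hv]
    exact hm'

end Asm

end

section
open MeasureTheory Set Filter Topology
open scoped ENNReal

theorem measurable_toPath {X : Type*} [MeasurableSpace X] (B : BratteliDiagram)
    (g : X → B.PathSpace) (hg : ∀ n a, MeasurableSet {x | (g x).1 n = a}) : Measurable g := by
  have hfin := B.finE
  let _ : ∀ n, MeasurableSpace (B.E n) := fun n => ⊤
  have : ∀ n, BorelSpace (B.E n) := fun n => ⟨borel_eq_top_of_discrete.symm⟩
  have h1 : (borel B.PathSpace) = MeasurableSpace.comap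
      (Subtype.val : { x : ∀ n, B.E n // ∀ n, B.rng n (x n) = B.src (n + 1) (x (n + 1)) } →
        ∀ n, B.E n) MeasurableSpace.pi := by
    rw [BorelSpace.measurable_eq (α := ∀ n, B.E n)]
    exact borel_comap
  change @Measurable _ _ _ (borel B.PathSpace) g
  rw [h1]
  apply measurable_comap_iff.2
  refine measurable_pi_lambda _ fun n => ?_
  refine measurable_to_countable' fun a => hg n a

theorem measurable_coord (B : BratteliDiagram) (n : ℕ) (a : B.E n) :
    MeasurableSet {x : B.PathSpace | x.1 n = a} := by
  have : Continuous fun x : B.PathSpace => x.1 n := (continuous_apply n).comp continuous_subtype_val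
  exact ((isOpen_discrete {a}).preimage this).measurableSet

instance (B : BratteliDiagram) : T2Space B.PathSpace :=
  inferInstanceAs (T2Space
    { x : ∀ n, B.E n // ∀ n, B.rng n (x n) = B.src (n + 1) (x (n + 1)) })

instance (B : BratteliDiagram) : SecondCountableTopology B.PathSpace := by
  have hfin := B.finE
  have h2 : ∀ n, SecondCountableTopology (B.E n) := fun n => inferInstance
  have h3 : SecondCountableTopology (∀ n, B.E n) := inferInstance
  exact TopologicalSpace.Subtype.secondCountableTopology
    {x : ∀ n, B.E n | ∀ n, B.rng n (x n) = B.src (n + 1) (x (n + 1))}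

theorem assemble {X : Type*} [MeasurableSpace X] [StandardBorelSpace X]
    (μ ν : Measure X) [IsProbabilityMeasure ν] (hμν : μ ≪ ν) (hνμ : ν ≪ μ)
    (R : X → X → Prop) {A : Type*} [Group A] [MeasurableSpace A]
    (c : X → X → A) (T : ℕ → X → X → Prop) (t e : ℕ → X → ℕ) (φ : ℕ → X → A) (bX : X → A)
    (hb : Measurable bX) (h : Asm ν T t e) (hφ : ∀ n x y, e n x = e n y → φ n x = φ n y)
    (W : Set X) (hW : MeasurableSet W) (hW0 : μ Wᶜ = 0)
    (hRT : ∀ x ∈ W, ∀ y ∈ W, R x y ↔ ∃ n, T n x y)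
    (hc : ∀ n x y, T n x y → c x y = (bX x)⁻¹ * (((List.range n).map fun k => φ k x).prod *
      (((List.range n).map fun k => φ k y).prod)⁻¹) * bX y) :
    ∃ (B : BratteliDiagram) (p : ∀ n, B.E n → ℝ) (μ0 : B.V 0 → ℝ)
      (μb : Measure B.PathSpace) (X₀ : Set X) (Xb₀ : Set B.PathSpace)
      (θ : X → B.PathSpace) (f : ∀ n, B.E n → A) (b : B.PathSpace → A),
      (∀ n e, 0 < p n e) ∧
      (∀ n (v : B.V n), ∑ᶠ e ∈ {e : B.E n | B.src n e = v}, p n e = 1) ∧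
      (∀ v, 0 < μ0 v) ∧ (∑ᶠ v : B.V 0, μ0 v = 1) ∧
      IsProbabilityMeasure μb ∧
      (∀ (x : B.PathSpace) (n : ℕ), μb (B.cyl x (n + 1)) =
        ENNReal.ofReal (μ0 (B.src 0 (x.1 0)) * ∏ k ∈ Finset.range (n + 1), p k (x.1 k))) ∧
      MeasurableSet X₀ ∧ μ X₀ᶜ = 0 ∧ MeasurableSet Xb₀ ∧ μb Xb₀ᶜ = 0 ∧
      Measurable θ ∧ Set.InjOn θ X₀ ∧ θ '' X₀ = Xb₀ ∧
      (∀ Bs : Set B.PathSpace, MeasurableSet Bs → (μ (θ ⁻¹' Bs) = 0 ↔ μb Bs = 0)) ∧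
      (∀ x ∈ X₀, ∀ y ∈ X₀, (R x y ↔ B.Tail (θ x) (θ y))) ∧
      Measurable b ∧
      (∀ x ∈ X₀, ∀ y ∈ X₀, R x y → ∀ N : ℕ,
        (∀ k ≥ N, (θ x).1 k = (θ y).1 k) →
        c x y = (b (θ x))⁻¹ *
          (((List.range N).map fun k => f k ((θ x).1 k)).prod *
            (((List.range N).map fun k => f k ((θ y).1 k)).prod)⁻¹) * b (θ y)) := by
  classical
  have hposm := h.pos_meas
  obtain ⟨x0, hx0⟩ := (Asm.pos_ae ν e).exists
  let θ : X → h.diag.PathSpace := fun x =>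
    if hx : x ∈ Asm.Pos ν e then h.path x hx else h.path x0 hx0
  have hθ : ∀ x ∈ Asm.Pos ν e, ∀ n, ((θ x).1 n).1 = e n x := by
    intro x hx n
    simp only [θ, dif_pos hx]; rfl
  have hθ' : ∀ x, x ∉ Asm.Pos ν e → ∀ n, ((θ x).1 n).1 = e n x0 := by
    intro x hx n
    simp only [θ, dif_neg hx]; rfl
  have hθm : Measurable θ := by
    refine measurable_toPath _ _ fun n a => ?_
    have : {x | (θ x).1 n = a} = (Asm.Pos ν e ∩ e n ⁻¹' {a.1}) ∪
        ((Asm.Pos ν e)ᶜ ∩ {_x | e n x0 = a.1}) := by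
      ext x
      by_cases hx : x ∈ Asm.Pos ν e
      · constructor
        · intro h1
          exact Or.inl ⟨hx, (hθ x hx n).symm.trans (congrArg Subtype.val h1)⟩
        · rintro (⟨_, h1⟩ | ⟨h1, _⟩)
          · exact Subtype.ext ((hθ x hx n).trans h1)
          · exact absurd hx h1
      · constructor
        · intro h1
          exact Or.inr ⟨hx, (hθ' x hx n).symm.trans (congrArg Subtype.val h1)⟩
        · rintro (⟨h1, _⟩ | ⟨_, h1⟩)
          · exact absurd h1 hx
          · exact Subtype.ext ((hθ' x hx n).trans h1)
    rw [this]
    exact (hposm.inter (h.me n (measurableSet_singleton _))).union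
      (hposm.compl.inter (MeasurableSet.const _))
  let X₀ : Set X := Asm.Pos ν e ∩ W
  have hX₀ : MeasurableSet X₀ := hposm.inter hW
  have hinj : InjOn θ X₀ := by
    intro x hx y hy hxy
    refine h.pI x y fun k => ?_
    rw [← hθ x hx.1, ← hθ y hy.1, hxy]
  have hν0 : ν X₀ᶜ = 0 := by
    rw [compl_inter]
    exact measure_union_null (Asm.pos_ae ν e) (hνμ hW0)
  have hXb : MeasurableSet (θ '' X₀) := hX₀.image_of_measurable_injOn hθm hinj
  have hemb : MeasurableEmbedding (fun x : X₀ => θ x.1) := by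
    have := hX₀.standardBorel
    exact (hθm.comp measurable_subtype_coe).measurableEmbedding
      (fun x y hxy => Subtype.ext (hinj x.2 y.2 hxy))
  obtain ⟨b, hbm, hbe⟩ := hemb.exists_measurable_extend (hb.comp measurable_subtype_coe)
    (fun _ => ⟨1⟩)
  have hbθ : ∀ x ∈ X₀, b (θ x) = bX x := fun x hx => congrFun hbe ⟨x, hx⟩
  have hT : ∀ x ∈ X₀, ∀ y ∈ X₀, ∀ N, (∀ k ≥ N, (θ x).1 k = (θ y).1 k) ↔ T N x y := by
    intro x hx y hy N
    constructor
    · intro hk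
      refine h.pF N x y fun k hkN => ?_
      rw [← hθ x hx.1, ← hθ y hy.1, hk k hkN]
    · intro hxy k hk
      apply Subtype.ext
      rw [hθ x hx.1, hθ y hy.1, h.pC N x y hxy k hk]
  have hf : ∀ x ∈ X₀, ∀ k, φ k (Asm.rep ν e k ((θ x).1 k)) = φ k x := by
    intro x hx k
    exact hφ k _ _ ((Asm.rep_spec k _).trans (hθ x hx.1 k))
  refine ⟨h.diag, h.pr, h.ini, ν.map θ, X₀, θ '' X₀, θ, fun n a => φ n (Asm.rep ν e n a), b,
    h.pr_pos, h.pr_sum, h.ini_pos, h.ini_sum, Measure.isProbabilityMeasure_map hθm.aemeasurable, ?_,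
    hX₀, hμν hν0, hXb, ?_, hθm, hinj, rfl, ?_, ?_, hbm, ?_⟩
  · intro x n
    have hcm : MeasurableSet (h.diag.cyl x (n + 1)) := by
      have : h.diag.cyl x (n + 1) = ⋂ k, ⋂ (_ : k < n + 1), {y | y.1 k = x.1 k} := by
        ext y; simp [BratteliDiagram.cyl]
      rw [this]
      exact MeasurableSet.iInter fun k => MeasurableSet.iInter fun _ => measurable_coord _ _ _
    rw [Measure.map_apply hθm hcm, ← h.cylX x (n + 1), ofReal_measureReal]
    apply measure_congr
    filter_upwards [Asm.pos_ae ν e] with y hy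
    apply propext
    constructor
    · intro h1
      have h2 : ∀ k < n + 1, e k y = (x.1 k).1 := fun k hk =>
        (hθ y hy k).symm.trans (congrArg Subtype.val (h1 k hk))
      refine ⟨?_, h2⟩
      rw [h.rng_eq n (x.1 n) y (h2 n (Nat.lt_succ_self n)), x.2 n]
    · rintro ⟨-, h2⟩ k hk
      exact Subtype.ext ((hθ y hy k).trans (h2 k hk))
  · rw [Measure.map_apply hθm hXb.compl]
    refine measure_mono_null ?_ hν0
    intro x hx hx'
    exact hx ⟨x, hx', rfl⟩
  · intro Bs hBs
    rw [Measure.map_apply hθm hBs]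
    exact ⟨fun h => hνμ h, fun h => hμν h⟩
  · intro x hx y hy
    rw [hRT x hx.2 y hy.2]
    exact exists_congr fun N => (hT x hx y hy N).symm
  · intro x hx y hy _ N hN
    rw [hc N x y ((hT x hx y hy N).1 hN), hbθ x hx, hbθ y hy]
    simp only [hf x hx, hf y hy]

end

section
open MeasureTheory Set Filter Topology
open scoped ENNReal

instance mulRealMS : MeasurableSpace (Multiplicative ℝ) := borel _

instance mulRealBS : BorelSpace (Multiplicative ℝ) := ⟨rfl⟩

theorem exists_diff {X : Type*} (S : ℕ → X → X → Prop) (l : ℕ → X → ℝ)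
    (hinc : ∀ n x y, S n x y → S (n + 1) x y)
    (hl : ∀ n x y, S n x y → l (n + 1) x - l (n + 1) y = l n x - l n y) :
    ∃ d : X → X → ℝ, ∀ n x y, S n x y → d x y = l n x - l n y := by
  classical
  refine ⟨fun x y => if h : ∃ n, S n x y then l (Nat.find h) x - l (Nat.find h) y else 0, ?_⟩
  intro n x y hn
  have h : ∃ n, S n x y := ⟨n, hn⟩
  simp only [dif_pos h]
  have key : ∀ m, Nat.find h ≤ m → l m x - l m y = l (Nat.find h) x - l (Nat.find h) y := by
    intro m hm
    induction m, hm using Nat.le_induction with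
    | base => rfl
    | succ m hm ih => rw [hl m x y (mono_rel hinc hm (Nat.find_spec h)), ih]
  exact (key n (Nat.find_min' h hn)).symm

theorem prodAux (n : ℕ) {A : Type*} [Group A] (g : ℕ → A × Multiplicative ℝ) :
    ((List.range n).map g).prod.1 = ((List.range n).map fun k => (g k).1).prod ∧
    Multiplicative.toAdd ((List.range n).map g).prod.2 =
      ∑ k ∈ Finset.range n, Multiplicative.toAdd (g k).2 := by
  induction n with
  | zero => simp
  | succ n ih =>
    rw [List.range_succ, List.map_append, List.prod_append, Finset.sum_range_succ, ← ih.2]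
    simp [ih.1, List.range_succ]

theorem main_aux
    {X : Type*} [MeasurableSpace X] [StandardBorelSpace X]
    (μ : Measure X) (hμ : IsProbabilityMeasure μ)
    (R : X → X → Prop) (hR : Equivalence R)
    (hgraph : MeasurableSet {p : X × X | R p.1 p.2})
    (hcount : ∀ x, {y | R x y}.Countable)
    (hqi : QuasiInvariantRel μ R)
    (hhyp : HyperfiniteRel μ R)
    {A : Type*} [Group A] [TopologicalSpace A] [IsTopologicalGroup A]
    [LocallyCompactSpace A] [SecondCountableTopology A] [T2Space A]
    [MeasurableSpace A] [BorelSpace A]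
    (c : X → X → A)
    (hcoc : ∀ x y z, R x y → R y z → c x y * c y z = c x z)
    (hmeas : Measurable (Set.restrict {p : X × X | R p.1 p.2}
      (fun p : X × X => c p.1 p.2))) :
    ∃ (B : BratteliDiagram) (p : ∀ n, B.E n → ℝ) (μ0 : B.V 0 → ℝ)
      (μb : Measure B.PathSpace) (X₀ : Set X) (Xb₀ : Set B.PathSpace)
      (θ : X → B.PathSpace) (f : ∀ n, B.E n → A) (b : B.PathSpace → A),
      (∀ n e, 0 < p n e) ∧
      (∀ n (v : B.V n), ∑ᶠ e ∈ {e : B.E n | B.src n e = v}, p n e = 1) ∧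
      (∀ v, 0 < μ0 v) ∧ (∑ᶠ v : B.V 0, μ0 v = 1) ∧
      IsProbabilityMeasure μb ∧
      (∀ (x : B.PathSpace) (n : ℕ), μb (B.cyl x (n + 1)) =
        ENNReal.ofReal (μ0 (B.src 0 (x.1 0)) * ∏ k ∈ Finset.range (n + 1), p k (x.1 k))) ∧
      MeasurableSet X₀ ∧ μ X₀ᶜ = 0 ∧ MeasurableSet Xb₀ ∧ μb Xb₀ᶜ = 0 ∧
      Measurable θ ∧ Set.InjOn θ X₀ ∧ θ '' X₀ = Xb₀ ∧
      (∀ Bs : Set B.PathSpace, MeasurableSet Bs → (μ (θ ⁻¹' Bs) = 0 ↔ μb Bs = 0)) ∧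
      (∀ x ∈ X₀, ∀ y ∈ X₀, (R x y ↔ B.Tail (θ x) (θ y))) ∧
      Measurable b ∧
      (∀ x ∈ X₀, ∀ y ∈ X₀, R x y → ∀ N : ℕ,
        (∀ k ≥ N, (θ x).1 k = (θ y).1 k) →
        c x y = (b (θ x))⁻¹ *
          (((List.range N).map fun k => f k ((θ x).1 k)).prod *
            (((List.range N).map fun k => f k ((θ y).1 k)).prod)⁻¹) * b (θ y)) := by
  have hcm : ∀ u v : X → X, Measurable u → Measurable v → (∀ x, R (u x) (v x)) →
      Measurable fun x => c (u x) (v x) := by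
    intro u v hu hv huv
    have : Measurable fun x => (⟨(u x, v x), huv x⟩ : {p : X × X | R p.1 p.2}) :=
      (hu.prodMk hv).subtype_mk
    exact hmeas.comp this
  obtain ⟨S, Z, l, heq, hinc, hfin, hgen, hSR, hZ, hZ0, hZR, hlm, hrn, hll⟩ :=
    step2 μ R hR hqi hhyp
  obtain ⟨d, hd⟩ := exists_diff S l hinc hll
  let C : X → X → A × Multiplicative ℝ := fun x y => (c x y, Multiplicative.ofAdd (d x y))
  have hCm : ∀ n (u v : X → X), Measurable u → Measurable v → (∀ x, S n (u x) (v x)) →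
      Measurable fun x => C (u x) (v x) := by
    intro n u v hu hv huv
    refine (hcm u v hu hv fun x => hSR n _ _ (huv x)).prodMk ?_
    have : (fun x => Multiplicative.ofAdd (d (u x) (v x))) =
        fun x => Multiplicative.ofAdd (l n (u x) - l n (v x)) := by
      funext x; rw [hd n _ _ (huv x)]
    rw [this]
    exact continuous_ofAdd.measurable.comp (((hlm n).comp hu).sub ((hlm n).comp hv))
  have hCc : ∀ n x y z, S n x y → S n y z → C x y * C y z = C x z := by
    intro n x y z hxy hyz
    refine Prod.ext (hcoc x y z (hSR _ _ _ hxy) (hSR _ _ _ hyz)) ?_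
    change Multiplicative.ofAdd (d x y) * Multiplicative.ofAdd (d y z) =
      Multiplicative.ofAdd (d x z)
    rw [← ofAdd_add, hd n _ _ hxy, hd n _ _ hyz, hd n _ _ ((heq n).trans hxy hyz)]
    congr 1; ring
  obtain ⟨T, K, M, W, hcore, hTS, hW, hW0, hWT⟩ := trunc μ S heq hinc hfin hgen C hCm hCc
  obtain ⟨Q, t, e, φ, b, mt, me, ft, fe, pA, pB, pC, pD, pE, pI, pF, hQ, hb, hbQ, hform⟩ :=
    core T C K M hcore
  let s : X → ℝ := fun x => Multiplicative.toAdd (b x).2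
  have hs : Measurable s := continuous_toAdd.measurable.comp (measurable_snd.comp hb)
  let Ψ : ℕ → X → ℝ := fun n x => ∑ k ∈ Finset.range n, Multiplicative.toAdd (φ k x).2
  have hf1 : ∀ n x y, T n x y → c x y = (b x).1⁻¹ *
      (((List.range n).map fun k => (φ k x).1).prod *
      (((List.range n).map fun k => (φ k y).1).prod)⁻¹) * (b y).1 := by
    intro n x y hxy
    have := congrArg Prod.fst (hform n x y hxy)
    rw [← (prodAux n fun k => φ k x).1, ← (prodAux n fun k => φ k y).1]
    exact this
  have hf2 : ∀ n x y, T n x y → l n x - l n y = - s x + (Ψ n x - Ψ n y) + s y := by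
    intro n x y hxy
    have := congrArg (fun g => Multiplicative.toAdd (Prod.snd g)) (hform n x y hxy)
    rw [← hd n x y (hTS n x y hxy)]
    refine this.trans ?_
    simp only [Prod.snd_mul, Prod.snd_inv, toAdd_mul, toAdd_inv, (prodAux n _).2]
    simp only [s, Ψ]
    ring
  obtain ⟨L, hL⟩ : ∃ L : ℝ, ∀ x, s x ≤ L := by
    have hc' : Continuous fun g : A × Multiplicative ℝ => Multiplicative.toAdd g.2 :=
      continuous_toAdd.comp continuous_snd
    obtain ⟨L, hL⟩ := (hQ.image hc').bddAbove
    exact ⟨L, fun x => hL ⟨b x, hbQ x, rfl⟩⟩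
  let w : X → ℝ≥0∞ := fun x => ENNReal.ofReal (Real.exp (s x))
  have hw : Measurable w := hs.exp.ennreal_ofReal
  have hw0 : ∀ x, w x ≠ 0 := fun x => (ENNReal.ofReal_pos.2 (Real.exp_pos _)).ne'
  let ν' : Measure X := μ.withDensity w
  have h1 : ν' ≪ μ := withDensity_absolutelyContinuous _ _
  have h2 : μ ≪ ν' := withDensity_absolutelyContinuous' hw.aemeasurable (ae_of_all _ hw0)
  have hne : ν' univ ≠ 0 := fun h => by
    have := h2 h
    simp at this
  have hnt : ν' univ ≠ ⊤ := by
    have : ν' univ ≤ ENNReal.ofReal (Real.exp L) := by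
      rw [withDensity_apply _ MeasurableSet.univ, Measure.restrict_univ]
      calc ∫⁻ x, w x ∂μ ≤ ∫⁻ _x, ENNReal.ofReal (Real.exp L) ∂μ :=
            lintegral_mono fun x => ENNReal.ofReal_le_ofReal (Real.exp_le_exp.2 (hL x))
        _ = _ := by simp
    exact (this.trans_lt ENNReal.ofReal_lt_top).ne
  let ν : Measure X := (ν' univ)⁻¹ • ν'
  have hνp : IsProbabilityMeasure ν := ⟨by
    change (ν' univ)⁻¹ * ν' univ = 1
    exact ENNReal.inv_mul_cancel hne hnt⟩
  have hνμ : ν ≪ μ := (Measure.smul_absolutelyContinuous).trans h1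
  have hμν : μ ≪ ν := h2.trans (Measure.absolutelyContinuous_smul (ENNReal.inv_ne_zero.2 hnt))
  have hrnν : ∀ n, RNProp ν (T n) (Ψ n) := by
    intro n
    have hT : RNProp μ (T n) (l n) := fun g B hg hB hi hgr =>
      hrn n g B hg hB hi fun x hx => hTS _ _ _ (hgr x hx)
    refine (rn_density μ (T n) (l n) s (hlm n) hs hT (ν' univ)⁻¹).congr fun x y hxy => ?_
    have := hf2 n x y hxy
    linarith
  have hasm : Asm ν T t e :=
    { mt := mt, me := me, ft := ft, fe := fe, pA := pA
      pB := fun n x y h => ⟨(pB n x y h).1, (pB n x y h).2.1⟩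
      pC := pC, pD := pD, pI := pI, pF := pF
      mkv := fun n x D hD hDi => markov ν (T n) (hcore.eqv n) (hcore.gen n) n (t n) e (Ψ n) (mt n) me
        (hrnν n) (fun x y h => Finset.sum_congr rfl fun k hk => by
          rw [(pB k x y (h k (Finset.mem_range.1 hk))).2.2]) (pA n) (pD n) (pE n) x D hD hDi }
  refine assemble μ ν hμν hνμ R c T t e (fun k x => (φ k x).1) (fun x => (b x).1)
    (measurable_fst.comp hb) hasm (fun n x y h => by rw [(pB n x y h).2.2]) (Z ∩ W) (hZ.inter hW)
    (by rw [compl_inter]; exact measure_union_null hZ0 hW0) ?_ hf1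
  intro x hx y hy
  constructor
  · intro hxy
    obtain ⟨n, hn⟩ := hZR x hx.1 y hy.1 hxy
    exact hWT x hx.2 n y hn
  · rintro ⟨n, hn⟩
    exact hSR n x y (hTS n x y hn)

end

/-- **The model theorem for Borel cocycles on hyperfinite equivalence relations.**
Given a hyperfinite measured equivalence relation `(X, R, μ)` (with `μ` a quasi-invariant
probability measure on a standard Borel space), a locally compact second countable
Hausdorff group `A` and a Borel cocycle `c : R → A`, there exist a Bratteli diagram with
path space `X̄` and tail equivalence relation `R̄`, a Markov measure `μ̄` on `X̄`
(given by a transition probability `p` and an initial distribution `μ₀`), an isomorphism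
`θ` between conull sets carrying `(R, μ)` to `(R̄, μ̄)`, a labelling `f : E → A` with
quasi-product cocycle `c̄`, and a Borel map `b : X̄ → A` such that
`c (x, y) = b(θ x)⁻¹ · c̄(θ x, θ y) · b(θ y)` on `R`, i.e. `θ` carries `c` into a
cocycle cohomologous to the quasi-product cocycle `c̄`. -/
theorem borel_cocycle_model_quasi_product
    {X : Type*} [MeasurableSpace X] [StandardBorelSpace X]
    (μ : Measure X) (hμ : IsProbabilityMeasure μ)
    (R : X → X → Prop) (hR : Equivalence R)
    (hgraph : MeasurableSet {p : X × X | R p.1 p.2})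
    (hcount : ∀ x, {y | R x y}.Countable)
    (hqi : QuasiInvariantRel μ R)
    (hhyp : HyperfiniteRel μ R)
    {A : Type*} [Group A] [TopologicalSpace A] [IsTopologicalGroup A]
    [LocallyCompactSpace A] [SecondCountableTopology A] [T2Space A]
    [MeasurableSpace A] [BorelSpace A]
    (c : X → X → A)
    (hcoc : ∀ x y z, R x y → R y z → c x y * c y z = c x z)
    (hmeas : Measurable (Set.restrict {p : X × X | R p.1 p.2}
      (fun p : X × X => c p.1 p.2))) :
    ∃ (B : BratteliDiagram) (p : ∀ n, B.E n → ℝ) (μ0 : B.V 0 → ℝ)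
      (μb : Measure B.PathSpace) (X₀ : Set X) (Xb₀ : Set B.PathSpace)
      (θ : X → B.PathSpace) (f : ∀ n, B.E n → A) (b : B.PathSpace → A),
      (∀ n e, 0 < p n e) ∧
      (∀ n (v : B.V n), ∑ᶠ e ∈ {e : B.E n | B.src n e = v}, p n e = 1) ∧
      (∀ v, 0 < μ0 v) ∧ (∑ᶠ v : B.V 0, μ0 v = 1) ∧
      IsProbabilityMeasure μb ∧
      (∀ (x : B.PathSpace) (n : ℕ), μb (B.cyl x (n + 1)) =
        ENNReal.ofReal (μ0 (B.src 0 (x.1 0)) * ∏ k ∈ Finset.range (n + 1), p k (x.1 k))) ∧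
      MeasurableSet X₀ ∧ μ X₀ᶜ = 0 ∧ MeasurableSet Xb₀ ∧ μb Xb₀ᶜ = 0 ∧
      Measurable θ ∧ Set.InjOn θ X₀ ∧ θ '' X₀ = Xb₀ ∧
      (∀ Bs : Set B.PathSpace, MeasurableSet Bs → (μ (θ ⁻¹' Bs) = 0 ↔ μb Bs = 0)) ∧
      (∀ x ∈ X₀, ∀ y ∈ X₀, (R x y ↔ B.Tail (θ x) (θ y))) ∧
      Measurable b ∧
      (∀ x ∈ X₀, ∀ y ∈ X₀, R x y → ∀ N : ℕ,
        (∀ k ≥ N, (θ x).1 k = (θ y).1 k) →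
        c x y = (b (θ x))⁻¹ *
          (((List.range N).map fun k => f k ((θ x).1 k)).prod *
            (((List.range N).map fun k => f k ((θ y).1 k)).prod)⁻¹) * b (θ y)) := by
  exact main_aux μ hμ R hR hgraph hcount hqi hhyp c hcoc hmeas
end

section
/- Let X and Y be compact Hausdorff totally disconnected spaces and let π : X → Y be a surjective local homeomorphism. Then for every finite partition Q of X into clopen sets there exists a finite partition P of X into clopen sets refining Q such that π is injective on each element of P and, for all ω, ω' ∈ P, the sets π(ω) and π(ω') are either equal or disjoint. -/
theorem clopen_sig_aux {X I : Type*} [TopologicalSpace X] [Finite I] (s : I → Set X)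
    (hs : ∀ i, IsClopen (s i)) (a : Set I) : IsClopen {x | {i | x ∈ s i} = a} := by
  have : {x | {i | x ∈ s i} = a} = ⋂ i, {x | x ∈ s i ↔ i ∈ a} := by
    ext x
    simp [Set.ext_iff]
  rw [this]
  refine isClopen_iInter_of_finite fun i => ?_
  by_cases h : i ∈ a
  · simpa [h] using hs i
  · simp only [h, iff_false]
    exact (hs i).compl

/-- **Existence of `π`-partitions.** Let `X` and `Y` be compact Hausdorff totally
disconnected spaces and let `π : X → Y` be a surjective local homeomorphism. Then every
finite partition `Q` of `X` into (nonempty) clopen sets is refined by a finite partition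
`P` of `X` into (nonempty) clopen `π`-sections such that the images under `π` of any two
members of `P` are either equal or disjoint (a `π`-partition). -/
theorem exists_pi_partition_refining
    {X Y : Type*} [TopologicalSpace X] [CompactSpace X] [T2Space X]
    [TotallyDisconnectedSpace X]
    [TopologicalSpace Y] [CompactSpace Y] [T2Space Y] [TotallyDisconnectedSpace Y]
    (π : X → Y) (hπ : Function.Surjective π) (hπloc : IsLocalHomeomorph π)
    (Q : Set (Set X)) (hQfin : Q.Finite) (hQclopen : ∀ q ∈ Q, IsClopen q)
    (hQne : ∀ q ∈ Q, q.Nonempty) (hQdisj : Q.PairwiseDisjoint id)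
    (hQcover : ⋃₀ Q = Set.univ) :
    ∃ P : Set (Set X), P.Finite ∧ (∀ p ∈ P, IsClopen p) ∧ (∀ p ∈ P, p.Nonempty) ∧
      P.PairwiseDisjoint id ∧ ⋃₀ P = Set.univ ∧
      (∀ p ∈ P, ∃ q ∈ Q, p ⊆ q) ∧
      (∀ p ∈ P, Set.InjOn π p) ∧
      (∀ p ∈ P, ∀ p' ∈ P, π '' p = π '' p' ∨ Disjoint (π '' p) (π '' p')) := by
  have hB : ∀ x : X, ∃ U : Set X, IsClopen U ∧ x ∈ U ∧ Set.InjOn π U := by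
    intro x
    obtain ⟨e, hx, rfl⟩ := hπloc x
    obtain ⟨U, hU, hxU, hUs⟩ := compact_exists_isClopen_in_isOpen e.open_source hx
    exact ⟨U, hU, hxU, e.injOn.mono hUs⟩
  choose U hU hxU hinj using hB
  obtain ⟨t, -, ht⟩ := isCompact_univ.elim_nhds_subcover U
    (fun x _ => (hU x).isOpen.mem_nhds (hxU x))
  have : Finite Q := hQfin
  let s : (Q ⊕ t) → Set X := Sum.elim (fun q => q.1) (fun x => U x.1)
  have hs : ∀ i, IsClopen (s i) := by
    rintro (q | x)
    · exact hQclopen _ q.2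
    · exact hU _
  let f : X → Set (Q ⊕ t) := fun x => {i | x ∈ s i}
  have hf : ∀ a, IsClopen {x | f x = a} := clopen_sig_aux s hs
  have hfinj : ∀ x y, f x = f y → π x = π y → x = y := by
    intro x y hxy h
    obtain ⟨z, hz, hxz⟩ := Set.mem_iUnion₂.1 (ht (Set.mem_univ x))
    have h1 : (Sum.inr ⟨z, hz⟩ : Q ⊕ t) ∈ f x := hxz
    have h2 := h1
    rw [hxy] at h2
    exact hinj z h1 h2 h
  let w : Set (Q ⊕ t) → Set Y := fun a => π '' {x | f x = a}
  have hw : ∀ a, IsClopen (w a) := fun a =>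
    ⟨((hf a).isClosed.isCompact.image hπloc.continuous).isClosed,
      hπloc.isOpenMap _ (hf a).isOpen⟩
  let g : Y → Set (Set (Q ⊕ t)) := fun y => {a | y ∈ w a}
  have hg : ∀ b, IsClopen {y | g y = b} := clopen_sig_aux w hw
  let h : X → Set (Q ⊕ t) × Set (Set (Q ⊕ t)) := fun x => (f x, g (π x))
  let c : Set (Q ⊕ t) × Set (Set (Q ⊕ t)) → Set X := fun v => {x | h x = v}
  have himg : ∀ x, π '' c (h x) = {y | g y = g (π x)} := by
    intro x
    ext y
    constructor
    · rintro ⟨z, hz, rfl⟩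
      exact congrArg Prod.snd hz
    · intro hy
      have h1 : f x ∈ g (π x) := ⟨x, rfl, rfl⟩
      have hy' : g y = g (π x) := hy
      rw [← hy'] at h1
      obtain ⟨z, hz, rfl⟩ := h1
      exact ⟨z, Prod.ext hz hy', rfl⟩
  refine ⟨Set.range fun x => c (h x), ?_, ?_, ?_, ?_, ?_, ?_, ?_, ?_⟩
  · refine (Set.finite_range c).subset ?_
    rintro _ ⟨x, rfl⟩
    exact ⟨_, rfl⟩
  · rintro _ ⟨x, rfl⟩
    have : c (h x) = {z | f z = f x} ∩ π ⁻¹' {y | g y = g (π x)} := by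
      ext z
      simp [c, h]
    simp only [this]
    exact (hf _).inter ((hg _).preimage hπloc.continuous)
  · rintro _ ⟨x, rfl⟩
    exact ⟨x, rfl⟩
  · rintro _ ⟨x, rfl⟩ _ ⟨y, rfl⟩ hne
    refine Set.disjoint_left.2 fun z hz hz' => hne ?_
    have h1 : h z = h x := hz
    have h2 : h z = h y := hz'
    simp only [← h1, ← h2]
  · refine Set.eq_univ_of_forall fun x => ⟨_, ⟨x, rfl⟩, rfl⟩
  · rintro _ ⟨x, rfl⟩
    obtain ⟨q, hq, hxq⟩ : x ∈ ⋃₀ Q := hQcover ▸ Set.mem_univ x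
    refine ⟨q, hq, fun z hz => ?_⟩
    have h1 : f z = f x := congrArg Prod.fst hz
    have h2 : (Sum.inl ⟨q, hq⟩ : Q ⊕ t) ∈ f x := hxq
    rw [← h1] at h2
    exact h2
  · rintro _ ⟨x, rfl⟩ y hy z hz hyz
    exact hfinj y z (congrArg Prod.fst (Eq.trans hy (Eq.symm hz))) hyz
  · rintro _ ⟨x, rfl⟩ _ ⟨y, rfl⟩
    simp only [himg]
    by_cases hxy : g (π x) = g (π y)
    · left
      rw [hxy]
    · right
      refine Set.disjoint_left.2 fun z hz hz' => hxy ?_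
      exact Eq.trans (Eq.symm hz) hz'
end

section
/- Let d ≥ 1 and let A be a d × d real matrix with all entries strictly positive. Then there exists exactly one sequence (ρ_n)_{n ≥ 0} of vectors in ℝ^d with all coordinates strictly positive such that ρ_{n-1} = A ρ_n for all n ≥ 1 and Σ_{v=1}^d ρ_0(v) = 1. Moreover, for this sequence there exists λ > 0 such that A ρ_0 = λ ρ_0 and ρ_n = λ^{-n} ρ_0 for all n ≥ 0 (λ is the Perron–Frobenius eigenvalue of A and ρ_0 the normalized Perron–Frobenius eigenvector). -/
open Matrix in
lemma pf_mul_pos {d : ℕ} (A : Matrix (Fin d) (Fin d) ℝ) (hA : ∀ i j, 0 < A i j)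
    (w : Fin d → ℝ) (hw : ∀ i, 0 ≤ w i) (j : Fin d) (hj : 0 < w j) (i : Fin d) :
    0 < (A *ᵥ w) i :=
  Finset.sum_pos' (fun k _ => mul_nonneg (hA i k).le (hw k)) ⟨j, Finset.mem_univ _, mul_pos (hA i j) hj⟩

lemma pf_lower {ι : Type} [Finite ι] (f : ι → ℝ) (hf : ∀ i, 0 < f i) :
    ∃ ε > 0, ∀ i, ε ≤ f i := by
  rcases isEmpty_or_nonempty ι with h | h
  · exact ⟨1, one_pos, fun i => h.elim i⟩
  · obtain ⟨i, hi⟩ := Finite.exists_min f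
    exact ⟨f i, hf i, hi⟩

open Matrix in
lemma pf_exists (d : ℕ) (hd : 1 ≤ d) (A : Matrix (Fin d) (Fin d) ℝ) (hA : ∀ i j, 0 < A i j) :
    ∃ (l : ℝ) (v : Fin d → ℝ), 0 < l ∧ (∀ i, 0 < v i) ∧ A *ᵥ v = l • v ∧ ∑ i, v i = 1 := by
  set M : ℝ := ∑ i, ∑ j, A i j with hM
  set K : Set ((Fin d → ℝ) × ℝ) :=
    (stdSimplex ℝ (Fin d) ×ˢ Set.Icc 0 M) ∩ {p | ∀ i, p.2 * p.1 i ≤ (A *ᵥ p.1) i} with hK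
  have hbound : ∀ (x : Fin d → ℝ) (t : ℝ), x ∈ stdSimplex ℝ (Fin d) →
      (∀ i, t * x i ≤ (A *ᵥ x) i) → t ≤ M := by
    intro x t hx h
    have h1 : ∑ i, t * x i ≤ ∑ i, (A *ᵥ x) i := Finset.sum_le_sum fun i _ => h i
    rw [← Finset.mul_sum, hx.2, mul_one] at h1
    refine h1.trans (Finset.sum_le_sum fun i _ => ?_)
    simp only [mulVec, dotProduct]
    refine Finset.sum_le_sum fun j _ => ?_
    have : x j ≤ 1 := by
      rw [← hx.2]
      exact Finset.single_le_sum (fun k _ => hx.1 k) (Finset.mem_univ j)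
    exact mul_le_of_le_one_right (hA i j).le this
  have hcl : IsClosed {p : (Fin d → ℝ) × ℝ | ∀ i, p.2 * p.1 i ≤ (A *ᵥ p.1) i} := by
    simp only [Set.ofPred_forall]
    refine isClosed_iInter fun i => isClosed_le (by fun_prop) ?_
    simp only [mulVec, dotProduct]
    fun_prop
  have hcomp : IsCompact K := ((isCompact_stdSimplex ℝ (Fin d)).prod isCompact_Icc).inter_right hcl
  have hne : K.Nonempty := by
    have hs := single_mem_stdSimplex ℝ (⟨0, hd⟩ : Fin d)
    have h0 : ∀ i, (0:ℝ) * (Pi.single (⟨0, hd⟩ : Fin d) (1:ℝ) : Fin d → ℝ) i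
        ≤ (A *ᵥ (Pi.single (⟨0, hd⟩ : Fin d) (1:ℝ))) i := by
      intro i
      rw [zero_mul]
      simp only [mulVec, dotProduct]
      exact Finset.sum_nonneg fun k _ => mul_nonneg (hA i k).le (hs.1 k)
    exact ⟨(_, 0), ⟨hs, le_refl _, hbound _ _ hs h0⟩, h0⟩
  obtain ⟨⟨x, t⟩, ⟨⟨hx, ht0, htM⟩, hle⟩, hmax⟩ := hcomp.exists_isMaxOn hne continuous_snd.continuousOn
  simp only at hx ht0 htM hle
  have hle' : ∀ i, t * x i ≤ (A *ᵥ x) i := hle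
  obtain ⟨j, hj⟩ : ∃ j, 0 < x j := by
    by_contra! h
    have := Finset.sum_nonpos (s := Finset.univ) fun i _ => h i
    rw [hx.2] at this
    linarith
  have hy := pf_mul_pos A hA x hx.1 j hj
  have heq : A *ᵥ x = t • x := by
    by_contra hne
    obtain ⟨k, hk⟩ := Function.ne_iff.1 hne
    have hw : ∀ i, 0 ≤ (A *ᵥ x - t • x) i := fun i => by simpa using hle' i
    have hwk : 0 < (A *ᵥ x - t • x) k := lt_of_le_of_ne (hw k) (by
      intro h; apply hk; simp only [Pi.sub_apply] at h; linarith)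
    have hp := pf_mul_pos A hA _ hw k hwk
    set y := A *ᵥ x with hyd
    obtain ⟨ε, hε, hle2⟩ := pf_lower (fun i => (A *ᵥ (y - t • x)) i / y i) fun i => div_pos (hp i) (hy i)
    have hS : 0 < ∑ i, y i := Finset.sum_pos (fun i _ => hy i) ⟨j, Finset.mem_univ _⟩
    set S := ∑ i, y i with hSd
    have hz : S⁻¹ • y ∈ stdSimplex ℝ (Fin d) := by
      refine ⟨fun i => mul_nonneg (inv_nonneg.2 hS.le) (hy i).le, ?_⟩
      simp only [Pi.smul_apply, smul_eq_mul, ← Finset.mul_sum]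
      exact inv_mul_cancel₀ hS.ne'
    have hz2 : ∀ i, (t + ε) * (S⁻¹ • y) i ≤ (A *ᵥ (S⁻¹ • y)) i := by
      intro i
      have h := hle2 i
      rw [le_div_iff₀ (hy i), mulVec_sub, mulVec_smul, ← hyd] at h
      simp only [Pi.sub_apply, Pi.smul_apply, smul_eq_mul] at h
      rw [mulVec_smul]
      simp only [Pi.smul_apply, smul_eq_mul]
      have := mul_le_mul_of_nonneg_left (show (t + ε) * y i ≤ (A *ᵥ y) i by linarith) (inv_nonneg.2 hS.le)
      linarith
    have : t + ε ≤ t := hmax (a := (S⁻¹ • y, t + ε)) ⟨⟨hz, by simp only; linarith, hbound _ _ hz hz2⟩, hz2⟩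
    linarith
  have hpos : ∀ i, 0 < t * x i := fun i => by
    have := hy i
    rwa [heq] at this
  have htpos : 0 < t := lt_of_le_of_ne ht0 (by
    rintro h; have := hpos j; rw [← h] at this; simp at this)
  exact ⟨t, x, htpos, fun i => pos_of_mul_pos_right (hpos i) ht0, heq, hx.2⟩

open Matrix in
lemma pf_uniq (d : ℕ) (hd : 1 ≤ d) (B : Matrix (Fin d) (Fin d) ℝ) (hB : ∀ i j, 0 < B i j)
    (u v : Fin d → ℝ) (hu : ∀ i, 0 < u i) (hv : ∀ i, 0 < v i) (hBv : B *ᵥ v = v)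
    (hBu : u ᵥ* B = u) (s : ℕ → Fin d → ℝ) (hs : ∀ n i, 0 < s n i)
    (hrec : ∀ n, s n = B *ᵥ s (n + 1)) : ∃ m : ℝ, ∀ n, s n = m • v := by
  set T : Set ℝ := {t | ∀ n i, t * v i ≤ s n i} with hT
  have hne : T.Nonempty := ⟨0, fun n i => by simpa using (hs n i).le⟩
  have hbd : BddAbove T := ⟨s 0 ⟨0, hd⟩ / v ⟨0, hd⟩, fun t ht => by
    rw [le_div_iff₀ (hv _)]; exact ht 0 _⟩
  set m := sSup T with hm
  have hmT : m ∈ T := by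
    intro n i
    rw [← le_div_iff₀ (hv i)]
    exact csSup_le hne fun t ht => by rw [le_div_iff₀ (hv i)]; exact ht n i
  set τ : ℕ → Fin d → ℝ := fun n => s n - m • v with hτ
  have hτ0 : ∀ n i, 0 ≤ τ n i := fun n i => by simpa [hτ] using hmT n i
  have hτrec : ∀ n, τ n = B *ᵥ τ (n + 1) := fun n => by
    simp only [hτ, mulVec_sub, mulVec_smul, hBv, ← hrec n]
  have hc : ∀ n, u ⬝ᵥ τ n = u ⬝ᵥ τ 0 := by
    intro n
    induction n with
    | zero => rfl
    | succ n ih => rw [← ih, hτrec n, dotProduct_mulVec, hBu]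
  obtain ⟨δ, hδ, hδle⟩ := pf_lower (fun p : Fin d × Fin d => B p.1 p.2 / (u p.2 * v p.1))
    fun p => div_pos (hB _ _) (mul_pos (hu _) (hv _))
  have hlow : ∀ n i, δ * (u ⬝ᵥ τ 0) * v i ≤ τ n i := by
    intro n i
    rw [← hc (n + 1), hτrec n]
    simp only [mulVec, dotProduct, Finset.mul_sum, Finset.sum_mul]
    refine Finset.sum_le_sum fun j _ => ?_
    have h := hδle (i, j)
    simp only at h
    rw [le_div_iff₀ (mul_pos (hu _) (hv _))] at h
    have := mul_le_mul_of_nonneg_right h (hτ0 (n+1) j)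
    linarith
  have hmem : m + δ * (u ⬝ᵥ τ 0) ∈ T := by
    intro n i
    have := hlow n i
    simp only [hτ, Pi.sub_apply, Pi.smul_apply, smul_eq_mul] at this ⊢
    linarith
  have h1 : m + δ * (u ⬝ᵥ τ 0) ≤ m := le_csSup hbd hmem
  have h2 : u ⬝ᵥ τ 0 ≤ 0 := by
    by_contra! h
    have := mul_pos hδ h
    linarith
  refine ⟨m, fun n => ?_⟩
  have h3 : ∑ i, u i * τ n i = 0 := le_antisymm ((hc n).trans_le h2)
    (Finset.sum_nonneg fun i _ => mul_nonneg (hu i).le (hτ0 n i))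
  rw [Finset.sum_eq_zero_iff_of_nonneg (fun i _ => mul_nonneg (hu i).le (hτ0 n i))] at h3
  funext i
  have h4 := (mul_eq_zero.1 (h3 i (Finset.mem_univ i))).resolve_left (hu i).ne'
  exact sub_eq_zero.1 h4


/-- **Perron–Frobenius for strictly positive matrices, stationary harmonic sequences.**
Let `A` be a `d × d` matrix (`d ≥ 1`) with strictly positive entries. Then there is
exactly one sequence `(ρ_n)` of strictly positive vectors in `ℝ^d` with
`ρ_{n-1} = A ρ_n` for all `n ≥ 1` and `∑_v ρ_0(v) = 1`; moreover for this sequence there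
is `λ > 0` with `A ρ_0 = λ ρ_0` and `ρ_n = λ⁻ⁿ ρ_0` for all `n` (`λ` being the
Perron–Frobenius eigenvalue and `ρ_0` the normalized Perron–Frobenius eigenvector). -/
theorem existsUnique_positive_harmonic_sequence
    (d : ℕ) (hd : 1 ≤ d) (A : Matrix (Fin d) (Fin d) ℝ)
    (hA : ∀ i j, 0 < A i j) :
    (∃! ρ : ℕ → Fin d → ℝ,
      (∀ n i, 0 < ρ n i) ∧ (∀ n, ρ n = A.mulVec (ρ (n + 1))) ∧
        (∑ v : Fin d, ρ 0 v = 1)) ∧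
    (∀ ρ : ℕ → Fin d → ℝ,
      (∀ n i, 0 < ρ n i) → (∀ n, ρ n = A.mulVec (ρ (n + 1))) →
        (∑ v : Fin d, ρ 0 v = 1) →
      ∃ lam : ℝ, 0 < lam ∧ A.mulVec (ρ 0) = lam • ρ 0 ∧
        ∀ n : ℕ, ρ n = (lam ^ n)⁻¹ • ρ 0) := by
  obtain ⟨l, v, hl, hv, hAv, hv1⟩ := pf_exists d hd A hA
  obtain ⟨l', u, hl', hu, hAu, hu1⟩ := pf_exists d hd A.transpose fun i j => hA j i
  rw [Matrix.mulVec_transpose] at hAu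
  have huv : 0 < dotProduct u v :=
    Finset.sum_pos (fun i _ => mul_pos (hu i) (hv i)) ⟨⟨0, hd⟩, Finset.mem_univ _⟩
  have hll : l' = l := by
    have h := Matrix.dotProduct_mulVec u A v
    rw [hAv, hAu, dotProduct_smul, smul_dotProduct] at h
    exact (mul_right_cancel₀ huv.ne' h).symm
  subst hll
  have key : ∀ ρ : ℕ → Fin d → ℝ, (∀ n i, 0 < ρ n i) → (∀ n, ρ n = A.mulVec (ρ (n + 1))) →
      (∑ v : Fin d, ρ 0 v = 1) → ∀ n, ρ n = (l' ^ n)⁻¹ • v := by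
    intro ρ hpos hrec hsum
    obtain ⟨m, hm⟩ := pf_uniq d hd (l'⁻¹ • A) (fun i j => mul_pos (inv_pos.2 hl) (hA i j)) u v hu hv
      (by rw [Matrix.smul_mulVec, hAv, smul_smul, inv_mul_cancel₀ hl.ne', one_smul])
      (by rw [Matrix.vecMul_smul, hAu, smul_smul, inv_mul_cancel₀ hl.ne', one_smul])
      (fun n => l' ^ n • ρ n) (fun n i => mul_pos (pow_pos hl n) (hpos n i))
      (fun n => by
        rw [Matrix.smul_mulVec, Matrix.mulVec_smul, ← hrec n, smul_smul, pow_succ']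
        rw [inv_mul_cancel_left₀ hl.ne'])
    have hm1 : m = 1 := by
      have h0 := hm 0
      simp only [pow_zero, one_smul] at h0
      rw [h0] at hsum
      simpa [← Finset.mul_sum, hv1] using hsum
    intro n
    have h := hm n
    rw [hm1, one_smul] at h
    rw [← h, smul_smul, inv_mul_cancel₀ (pow_pos hl n).ne', one_smul]
  refine ⟨⟨fun n => (l' ^ n)⁻¹ • v, ⟨fun n i => mul_pos (inv_pos.2 (pow_pos hl n)) (hv i),
    fun n => ?_, by simpa using hv1⟩, fun ρ h => funext (key ρ h.1 h.2.1 h.2.2)⟩, ?_⟩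
  · simp only
    rw [Matrix.mulVec_smul, hAv, smul_smul, pow_succ, mul_inv, inv_mul_cancel_right₀ hl.ne']
  · intro ρ h1 h2 h3
    have h := key ρ h1 h2 h3
    have h0 : ρ 0 = v := by simpa using h 0
    exact ⟨l', hl, by rw [h0, hAv], fun n => by rw [h0, h n]⟩
end
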